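/- arXiv:2412.04200 — 2 statements merged into one kernel-verified Lean document; each statement's English description precedes it below -/
import Mathlib

section
/- If G is a connected regular simple graph that is not isomorphic to K2 (the complete graph on two vertices), then lir(^2G) ≤ 2; that is, there exists a function r : E(G) → {0,1,2} such that for every edge uv of G: if r(uv) ≥ 1 then the red degrees of u and v differ, and if r(uv) ≤ 1 then the blue degrees of u and v differ. -/
open scoped Classical

/-- The red degree of a vertex `x`: the sum of the red multiplicities `r e`
over all edges `e` of `G` incident with `x`. -/
noncomputable def redDeg {V : Type*} [Fintype V] [DecidableEq V]
    (G : SimpleGraph V) (r : Sym2 V → ℕ) (x : V) : ℕ :=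
  ∑ e ∈ G.edgeFinset.filter (fun e => x ∈ e), r e

/-- The blue degree of a vertex `x`: the sum of `2 - r e` over all edges `e`
of `G` incident with `x`. -/
noncomputable def blueDeg {V : Type*} [Fintype V] [DecidableEq V]
    (G : SimpleGraph V) (r : Sym2 V → ℕ) (x : V) : ℕ :=
  ∑ e ∈ G.edgeFinset.filter (fun e => x ∈ e), (2 - r e)

/-- `r : E(G) → {0,1,2}` encodes a locally irregular 2-edge-coloring of `²G`:
every edge gets a red multiplicity at most 2, and for every edge `uv`, if
`r s(u,v) ≥ 1` the red degrees of `u` and `v` differ, and if `r s(u,v) ≤ 1`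
the blue degrees of `u` and `v` differ. -/
def IsLIR2 {V : Type*} [Fintype V] [DecidableEq V]
    (G : SimpleGraph V) (r : Sym2 V → ℕ) : Prop :=
  (∀ e ∈ G.edgeSet, r e ≤ 2) ∧
  ∀ u v : V, G.Adj u v →
    (1 ≤ r s(u, v) → redDeg G r u ≠ redDeg G r v) ∧
    (r s(u, v) ≤ 1 → blueDeg G r u ≠ blueDeg G r v)

/-- `lir(²G) ≤ 2`: there is a locally irregular 2-edge-coloring of `²G`. -/
def LIRtwoLE2 {V : Type*} [Fintype V] [DecidableEq V] (G : SimpleGraph V) : Prop :=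
  ∃ r : Sym2 V → ℕ, IsLIR2 G r

/-!
If `G` is `d`-regular, then the red and blue degrees of `x` sum to `2 * d`, so `r` is locally
irregular as soon as the weighting `r - 1` with values in `{-1, 0, 1}` has distinct sums at adjacent
vertices. Such a weighting is built from an independent set `I` for which the bipartite graph
between `I` and `Iᶜ` is connected.

If `Iᶜ` has an even number of vertices, some set of edges of this bipartite graph has odd degree
exactly at the vertices outside `I`. Let `δ` be a maximum cut of `G[Iᶜ]`, and give the chosen edges
at `b ∉ I` the weight `δ b`: the sums are then even on `I`, and odd of sign `δ b` at `b ∉ I`. Only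
adjacent vertices on the same side of the cut can still conflict. Going through `Iᶜ` in some order,
assign to each `b` a change `2 * k b * δ b` of its sum that avoids conflicts with its predecessors.
Adding `δ b` on `k b` uncut edges at each `b`, together with a flow across the cut, which exists
because the cut is maximum, realizes all these changes at once.

If `Iᶜ` has an odd number of vertices, then a vertex `z ∉ I` at maximum distance from some `r ∈ I`
is removed first and finally joined by edges of weight `±1` to an even set of its neighbours. The
sum at `z` is then even and must differ from the sums at the neighbours of `z` in `I`. If there are
several of these neighbours, or if `Iᶜ` is independent, then some choice of signs and parities
succeeds. If there is exactly one, `x`, and every choice fails, then in the punctured bipartite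
graph no cycle passes through `x` and no neighbour of `x` is a leaf. Regularity and the maximality
of the distance of `z` exclude this, except that for degree `2` the maximum cut is modified instead.
-/

namespace LocallyIrregular

open Finset SimpleGraph

/-! ### Edge weightings and joins -/

section EdgeWeight

variable {V M : Type*} {G H : SimpleGraph V}

/-- An edge weighting of `H`, encoded as a symmetric function of ordered pairs of vertices that
vanishes on nonadjacent pairs. -/
structure IsEdgeWeight [Zero M] (H : SimpleGraph V) (w : V → V → M) : Prop where
  symm : ∀ u v, w u v = w v u
  eq_zero : ∀ {u v}, ¬H.Adj u v → w u v = 0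

theorem IsEdgeWeight.zero [Zero M] : IsEdgeWeight H (0 : V → V → M) :=
  ⟨fun _ _ => rfl, fun _ => rfl⟩

theorem IsEdgeWeight.add [AddZeroClass M] {w w' : V → V → M} (h : IsEdgeWeight H w)
    (h' : IsEdgeWeight H w') : IsEdgeWeight H (w + w') where
  symm u v := by simp only [Pi.add_apply, h.symm u v, h'.symm u v]
  eq_zero huv := by simp only [Pi.add_apply, h.eq_zero huv, h'.eq_zero huv, add_zero]

theorem IsEdgeWeight.mono [Zero M] {w : V → V → M} (h : IsEdgeWeight H w) (hle : H ≤ G) :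
    IsEdgeWeight G w :=
  ⟨h.symm, fun huv => h.eq_zero fun hH => huv (hle hH)⟩

theorem IsEdgeWeight.adj [Zero M] {w : V → V → M} (h : IsEdgeWeight H w) {u v : V}
    (huv : w u v ≠ 0) : H.Adj u v :=
  not_imp_comm.1 h.eq_zero huv

end EdgeWeight

section Join

variable {V : Type*} [Fintype V] {G H : SimpleGraph V} {τ τ' : V → ZMod 2} {w w' : V → V → ZMod 2}

/-- A `T`-join of `H`, as a `ZMod 2`-valued edge weighting; `τ` is the indicator function of the
set `T` of vertices of odd degree. -/
structure IsJoin (H : SimpleGraph V) (τ : V → ZMod 2) (w : V → V → ZMod 2) : Prop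
    extends IsEdgeWeight H w where
  sum_eq : ∀ u, ∑ v, w u v = τ u

theorem IsJoin.zero : IsJoin H 0 0 :=
  ⟨.zero, fun _ => sum_const_zero⟩

theorem IsJoin.add (h : IsJoin H τ w) (h' : IsJoin H τ' w') : IsJoin H (τ + τ') (w + w') where
  toIsEdgeWeight := h.toIsEdgeWeight.add h'.toIsEdgeWeight
  sum_eq u := by simp only [Pi.add_apply, sum_add_distrib, h.sum_eq, h'.sum_eq]

theorem IsJoin.mono (h : IsJoin H τ w) (hle : H ≤ G) : IsJoin G τ w :=
  ⟨h.toIsEdgeWeight.mono hle, h.sum_eq⟩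

theorem IsJoin.sum {ι : Type*} {τ : ι → V → ZMod 2} {w : ι → V → V → ZMod 2} (s : Finset ι)
    (h : ∀ i ∈ s, IsJoin H (τ i) (w i)) : IsJoin H (∑ i ∈ s, τ i) (∑ i ∈ s, w i) := by
  induction s using Finset.induction_on with
  | empty => exact .zero
  | insert i s hi ih =>
    rw [sum_insert hi, sum_insert hi]
    exact (h i (mem_insert_self i s)).add (ih fun k hk => h k (mem_insert_of_mem hk))

/-- The indicator function of the edge `ab`, as an edge weighting. -/
noncomputable def edgeWeight (a b : V) : V → V → ZMod 2 :=
  fun u v => if s(u, v) = s(a, b) then 1 else 0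

theorem isJoin_edgeWeight {a b : V} (hab : H.Adj a b) :
    IsJoin H (Pi.single a 1 + Pi.single b 1) (edgeWeight a b) where
  symm u v := by simp only [edgeWeight, Sym2.eq_swap]
  eq_zero {u v} huv := if_neg fun h => huv <| by rwa [← mem_edgeSet, h]
  sum_eq u := by
    have hne := hab.ne
    by_cases hua : u = a
    · subst hua
      simp [edgeWeight, hne]
    · by_cases hub : u = b <;> simp [edgeWeight, hua, hub, hne.symm]

theorem exists_join_of_walk {a b : V} (p : H.Walk a b) :
    ∃ w, IsJoin H (Pi.single a 1 + Pi.single b 1) w := by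
  induction p with
  | nil => exact ⟨0, by simpa only [ZModModule.add_self] using IsJoin.zero⟩
  | @cons a b c hab _ ih =>
    obtain ⟨w, hw⟩ := ih
    refine ⟨edgeWeight a b + w, ?_⟩
    have := (isJoin_edgeWeight hab).add hw
    rwa [add_assoc, ← add_assoc (Pi.single b 1), ZModModule.add_self, zero_add] at this

theorem exists_join (r : V) (hτ : ∑ v, τ v = 0) (hr : ∀ v, τ v ≠ 0 → H.Reachable r v) :
    ∃ w, IsJoin H τ w := by
  have hpath : ∀ v, ∃ w, IsJoin H (τ v • (Pi.single r 1 + Pi.single v 1)) w := by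
    intro v
    by_cases hv : τ v = 0
    · exact ⟨0, by simpa only [hv, zero_smul] using IsJoin.zero⟩
    · obtain ⟨p⟩ := hr v hv
      have hv1 : τ v = 1 := Fin.eq_one_of_ne_zero _ hv
      simpa only [hv1, one_smul] using exists_join_of_walk p
  choose w hw using hpath
  have hsum := IsJoin.sum univ fun v _ => hw v
  have hτ' : ∑ v, τ v • (Pi.single r 1 + Pi.single v 1 : V → ZMod 2) = τ := by
    ext u
    simp [Finset.sum_apply, sum_add_distrib, hτ, Pi.single_apply]
  exact ⟨_, hτ' ▸ hsum⟩

end Join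

section Reduction

variable {V : Type*} [Fintype V] {G : SimpleGraph V}

/-- `G` has an edge weighting with weights in `{-1, 0, 1}` whose vertex sums distinguish adjacent
vertices. For regular `G` these are the colorings sought: the weight of an edge is its red
multiplicity minus `1`. -/
def HasSumDistinguishingWeighting (G : SimpleGraph V) : Prop :=
  ∃ f : V → V → ℤ, IsEdgeWeight G f ∧ (∀ u v, |f u v| ≤ 1) ∧
    ∀ u v, G.Adj u v → ∑ y, f u y ≠ ∑ y, f v y

theorem sum_incident_edges_eq [DecidableEq V] {M : Type*} [AddCommMonoid M] (G : SimpleGraph V)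
    (r : Sym2 V → M) (x : V) :
    ∑ e ∈ G.edgeFinset.filter (fun e => x ∈ e), r e = ∑ y ∈ G.neighborFinset x, r s(x, y) := by
  have himage : G.edgeFinset.filter (fun e => x ∈ e) = (G.neighborFinset x).image (s(x, ·)) := by
    ext e
    induction e with
    | _ u v =>
      simp only [mem_filter, mem_edgeFinset, mem_edgeSet, Sym2.mem_iff, mem_image,
        mem_neighborFinset]
      constructor
      · rintro ⟨huv, rfl | rfl⟩
        · exact ⟨v, huv, rfl⟩
        · exact ⟨u, huv.symm, Sym2.eq_swap⟩
      · rintro ⟨y, hxy, hy⟩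
        rw [← mem_edgeSet, ← hy]
        exact ⟨hxy, Sym2.mem_iff.1 (hy ▸ Sym2.mem_mk_left x y)⟩
  rw [himage, sum_image fun y _ z _ hyz => Sym2.congr_right.1 hyz]

theorem HasSumDistinguishingWeighting.lirtwoLE2 [DecidableEq V] {d : ℕ}
    (h : HasSumDistinguishingWeighting G) (hreg : G.IsRegularOfDegree d) : LIRtwoLE2 G := by
  obtain ⟨f, hf, hbound, hne⟩ := h
  let r : Sym2 V → ℕ :=
    Sym2.lift ⟨fun u v => (f u v + 1).toNat, fun u v => by simp only [hf.symm u v]⟩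
  have hr : ∀ u v, (r s(u, v) : ℤ) = f u v + 1 := fun u v =>
    Int.toNat_of_nonneg (by linarith [neg_le_of_abs_le (hbound u v)])
  have hr2 : ∀ u v, r s(u, v) ≤ 2 := fun u v => by
    have := hr u v
    have := le_of_abs_le (hbound u v)
    omega
  have hsum : ∀ x, ∑ y ∈ G.neighborFinset x, f x y = ∑ y, f x y := fun x =>
    sum_subset (subset_univ _) fun y _ hy => hf.eq_zero (by simpa using hy)
  have hred : ∀ x, (redDeg G r x : ℤ) = ∑ y, f x y + d := fun x => by
    simp [redDeg, sum_incident_edges_eq, hr, sum_add_distrib, hsum, hreg.degree_eq x]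
  have hblue : ∀ x, (blueDeg G r x : ℤ) = d - ∑ y, f x y := fun x => by
    simp only [blueDeg, sum_incident_edges_eq, Nat.cast_sum, Nat.cast_sub (hr2 x _), hr]
    rw [← hsum, ← hreg.degree_eq x, ← card_neighborFinset_eq_degree, card_eq_sum_ones, Nat.cast_sum,
      ← sum_sub_distrib]
    exact sum_congr rfl fun y _ => by push_cast; ring
  refine ⟨r, fun e _ => ?_, fun u v huv => ⟨fun _ heq => ?_, fun _ heq => ?_⟩⟩
  · induction e with
    | _ u v => exact hr2 u v
  · have := congrArg (Nat.cast (R := ℤ)) heq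
    rw [hred, hred] at this
    exact hne u v huv (by linarith)
  · have := congrArg (Nat.cast (R := ℤ)) heq
    rw [hblue, hblue] at this
    exact hne u v huv (by linarith)

end Reduction

/-! ### Integral flows with prescribed supplies -/

section Flow

variable {V : Type*}

theorem exists_owner_of_hall {E : Type*} [Fintype E] [Fintype V] (ends : E → Finset V) (m : V → ℕ)
    (hm : ∑ v, m v = Fintype.card E)
    (hall : ∀ X : Finset V, ∑ v ∈ X, m v ≤ #{e | ¬Disjoint (ends e) X}) :
    ∃ owner : E → V, (∀ e, owner e ∈ ends e) ∧ ∀ v, #{e | owner e = v} = m v := by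
  let t : (Σ v, Fin (m v)) → Finset E := fun i => {e | i.1 ∈ ends e}
  have ht : ∀ s : Finset (Σ v, Fin (m v)), #s ≤ #(s.biUnion t) := by
    intro s
    calc #s ≤ #((s.image Sigma.fst).sigma fun _ => univ) :=
          card_le_card fun i hi => mem_sigma.2 ⟨mem_image_of_mem _ hi, mem_univ _⟩
      _ = ∑ v ∈ s.image Sigma.fst, m v := by simp only [card_sigma, card_univ, Fintype.card_fin]
      _ ≤ #{e | ¬Disjoint (ends e) (s.image Sigma.fst)} := hall _
      _ ≤ #(s.biUnion t) := card_le_card fun e he => by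
          obtain ⟨v, hv, hvs⟩ := not_disjoint_iff.1 (mem_filter.1 he).2
          obtain ⟨i, hi, rfl⟩ := mem_image.1 hvs
          exact mem_biUnion.2 ⟨i, hi, mem_filter.2 ⟨mem_univ e, hv⟩⟩
  obtain ⟨slot, hinj, hslot⟩ := (all_card_le_biUnion_card_iff_exists_injective t).1 ht
  have hbij : slot.Bijective := (Fintype.bijective_iff_injective_and_card slot).2
    ⟨hinj, by simp only [Fintype.card_sigma, Fintype.card_fin, hm]⟩
  let σ := Equiv.ofBijective slot hbij
  refine ⟨fun e => (σ.symm e).1, fun e => ?_, fun v => ?_⟩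
  · have he : slot (σ.symm e) = e := σ.apply_symm_apply e
    have hmem := hslot (σ.symm e)
    rw [he] at hmem
    exact (mem_filter.1 hmem).2
  · calc #{e | (σ.symm e).1 = v} = #{i : Σ v, Fin (m v) | i.1 = v} :=
          card_equiv σ.symm fun e => by simp only [mem_filter, mem_univ, true_and]
      _ = m v := by
          rw [card_filter, Fintype.sum_sigma, sum_eq_single v] <;> simp +contextual

/-- The arcs of a network in which `c u v` parallel arcs run from `u` to `v`. -/
abbrev Arc (c : V → V → ℕ) : Type _ := Σ a : V × V, Fin (c a.1 a.2)

theorem card_filter_arc [Fintype V] (c : V → V → ℕ) (P : Arc c → Prop) [DecidablePred P] :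
    #{e | P e} = ∑ u, ∑ v, #{i | P ⟨(u, v), i⟩} := by
  simp only [card_filter, Fintype.sum_sigma, Fintype.sum_prod_type]

theorem sum_add_inCapacity_le [Fintype V] {c : V → V → ℕ} {b : V → ℤ}
    (hcut : ∀ X : Finset V, ∑ u ∈ X, b u ≤ ∑ u ∈ X, ∑ v ∈ Xᶜ, (c u v : ℤ)) (X : Finset V) :
    ∑ v ∈ X, (b v + ∑ u, (c u v : ℤ)) ≤ #{e : Arc c | ¬Disjoint {e.1.1, e.1.2} X} := by
  have htouch : ∀ u v, (#{_i : Fin (c u v) | ¬Disjoint {u, v} X} : ℤ) =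
      (if u ∈ X then if v ∈ Xᶜ then (c u v : ℤ) else 0 else 0) +
        if v ∈ X then (c u v : ℤ) else 0 := by
    intro u v
    by_cases hu : u ∈ X <;> by_cases hv : v ∈ X <;> simp [hu, hv]
  rw [card_filter_arc]
  simp only [Nat.cast_sum, htouch, sum_add_distrib, sum_ite_irrel, sum_const_zero, sum_ite_mem,
    univ_inter]
  rw [sum_comm (s := X)]
  linarith [hcut X]

theorem card_owner_eq {c : V → V → ℕ} {owner : Arc c → V}
    (hends : ∀ e, owner e ∈ ({e.1.1, e.1.2} : Finset V)) (x u v : V) :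
    (#{i | owner ⟨(u, v), i⟩ = x} : ℤ) =
      (if u = x then (#{i | owner ⟨(u, v), i⟩ = u} : ℤ) else 0) +
        if v = x then (c u v : ℤ) - #{i | owner ⟨(u, v), i⟩ = u} else 0 := by
  have hmem : ∀ i, owner ⟨(u, v), i⟩ = u ∨ owner ⟨(u, v), i⟩ = v := fun i => by
    simpa only [mem_insert, mem_singleton] using hends ⟨(u, v), i⟩
  rcases eq_or_ne u x with rfl | hux
  · rcases eq_or_ne v u with rfl | hvu
    · have hloop : #{i | owner ⟨(v, v), i⟩ = v} = c v v := by
        simp [filter_true_of_mem, or_self_iff.1 (hmem _)]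
      rw [if_pos rfl, if_pos rfl, add_sub_cancel, hloop]
    · rw [if_pos rfl, if_neg hvu, add_zero]
  · rcases eq_or_ne v x with rfl | hvx
    · have hnot : ∀ i, owner ⟨(u, v), i⟩ = v ↔ ¬owner ⟨(u, v), i⟩ = u := fun i =>
        ⟨fun h h' => hux (h'.symm.trans h), (hmem i).resolve_left⟩
      rw [if_neg hux, if_pos rfl, zero_add, eq_sub_iff_add_eq', filter_congr fun i _ => hnot i]
      exact_mod_cast (card_filter_add_card_filter_not _).trans (Fintype.card_fin (c u v))
    · have hnone : ∀ i, ¬owner ⟨(u, v), i⟩ = x := fun i h =>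
        (hmem i).elim (fun h' => hux (h'.symm.trans h)) fun h' => hvx (h'.symm.trans h)
      simp [hux, hvx, hnone]

/-- Gale's supply-demand theorem. An arc is owned by its tail if it carries flow and by its head
otherwise, so `v` has to own `b v` arcs more than enter it. -/
theorem exists_flow_of_supply_le_cut [Fintype V] (c : V → V → ℕ) (b : V → ℤ) (hb : ∑ v, b v = 0)
    (hcut : ∀ X : Finset V, ∑ u ∈ X, b u ≤ ∑ u ∈ X, ∑ v ∈ Xᶜ, (c u v : ℤ)) :
    ∃ p : V → V → ℕ, (∀ u v, p u v ≤ c u v) ∧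
      ∀ u, ∑ v, (p u v : ℤ) - ∑ v, (p v u : ℤ) = b u := by
  have hnonneg : ∀ v, 0 ≤ b v + ∑ u, (c u v : ℤ) := by
    intro v
    have h := hcut {v}ᶜ
    have hin : ∑ u ∈ {v}ᶜ, (c u v : ℤ) ≤ ∑ u, (c u v : ℤ) :=
      sum_le_univ_sum_of_nonneg fun u => Nat.cast_nonneg _
    have hsplit := sum_compl_add_sum {v} b
    simp only [compl_compl, sum_singleton] at h hsplit
    linarith
  have hm : ∀ v, ((b v + ∑ u, (c u v : ℤ)).toNat : ℤ) = b v + ∑ u, (c u v : ℤ) :=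
    fun v => Int.toNat_of_nonneg (hnonneg v)
  obtain ⟨owner, hends, howner⟩ := exists_owner_of_hall
    (fun e : Arc c => {e.1.1, e.1.2}) (fun v => (b v + ∑ u, (c u v : ℤ)).toNat)
    (by
      zify
      simp only [hm, sum_add_distrib, hb, Fintype.card_sigma, Fintype.card_fin,
        Fintype.sum_prod_type_right]
      push_cast
      ring)
    (fun X => by zify; simpa only [hm] using sum_add_inCapacity_le hcut X)
  let p : V → V → ℕ := fun u v => #{i | owner ⟨(u, v), i⟩ = u}
  have hle : ∀ u v, p u v ≤ c u v := fun u v =>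
    (card_le_univ _).trans_eq (Fintype.card_fin _)
  have hp : ∀ x u v, (#{i | owner ⟨(u, v), i⟩ = x} : ℤ) =
      (if u = x then (p u v : ℤ) else 0) + if v = x then (c u v : ℤ) - p u v else 0 :=
    card_owner_eq hends
  refine ⟨p, hle, fun u => ?_⟩
  have hu := congrArg (Nat.cast (R := ℤ)) (howner u)
  rw [card_filter_arc, hm] at hu
  simp only [Nat.cast_sum, hp, sum_add_distrib, sum_ite_eq', sum_sub_distrib, mem_univ, if_true,
    sum_ite_irrel, sum_const_zero] at hu
  linarith

end Flow

/-! ### Maximum cuts -/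

section MaxCut

variable {V : Type*} [Fintype V] {H : SimpleGraph V} {δ δ' : V → ℤˣ}

/-- The number of uncut minus the number of cut edges, counted twice, for the cut of `H` given
by the two sign classes of `δ`. -/
noncomputable def cutEnergy (H : SimpleGraph V) (δ : V → ℤˣ) : ℤ :=
  ∑ u, ∑ v, if H.Adj u v then (δ u * δ v : ℤ) else 0

/-- The sign classes of `δ` form a maximum cut of `H`. -/
def IsMaxCut (H : SimpleGraph V) (δ : V → ℤˣ) : Prop :=
  ∀ δ', cutEnergy H δ ≤ cutEnergy H δ'

theorem exists_isMaxCut (H : SimpleGraph V) : ∃ δ, IsMaxCut H δ :=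
  Finite.exists_min (cutEnergy H)

theorem IsMaxCut.congr (hδ : IsMaxCut H δ) (h : ∀ u v, H.Adj u v → δ u = δ' u) :
    IsMaxCut H δ' := by
  have heq : cutEnergy H δ' = cutEnergy H δ :=
    sum_congr rfl fun u _ => sum_congr rfl fun v _ => by
      split_ifs with huv
      · rw [h u v huv, h v u huv.symm]
      · rfl
  exact fun ε => heq ▸ hδ ε

theorem cutEnergy_flip (H : SimpleGraph V) (δ : V → ℤˣ) (X : Finset V) :
    cutEnergy H (fun v => if v ∈ X then -δ v else δ v) =
      cutEnergy H δ - 4 * ∑ u ∈ X, ∑ v ∈ Xᶜ, if H.Adj u v then (δ u * δ v : ℤ) else 0 := by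
  set g : V → V → ℤ := fun u v => if H.Adj u v then (δ u * δ v : ℤ) else 0 with hg
  have hgsymm : ∑ u ∈ Xᶜ, ∑ v ∈ X, g u v = ∑ u ∈ X, ∑ v ∈ Xᶜ, g u v := by
    rw [sum_comm]
    simp only [hg, H.adj_comm, mul_comm]
  have hterm : ∀ u v, (if H.Adj u v then
      (((if u ∈ X then -δ u else δ u : ℤˣ) : ℤ) *
        ((if v ∈ X then -δ v else δ v : ℤˣ) : ℤ)) else 0) =
      g u v - 2 * (if u ∈ X then if v ∈ Xᶜ then g u v else 0 else 0) -
        2 * (if u ∈ Xᶜ then if v ∈ X then g u v else 0 else 0) := by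
    intro u v
    by_cases huv : H.Adj u v <;> by_cases hu : u ∈ X <;> by_cases hv : v ∈ X <;>
      simp only [hg, huv, hu, hv, mem_compl, not_true_eq_false, not_false_eq_true, if_true,
        if_false, Units.val_neg] <;> ring
  simp only [cutEnergy, hterm, sum_sub_distrib, ← mul_sum, sum_ite_irrel, sum_const_zero,
    sum_ite_mem, univ_inter, hgsymm]
  ring

theorem IsMaxCut.sum_switch_nonpos (hδ : IsMaxCut H δ) (X : Finset V) :
    ∑ u ∈ X, ∑ v ∈ Xᶜ, (if H.Adj u v then (δ u * δ v : ℤ) else 0) ≤ 0 := by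
  have h := hδ fun v => if v ∈ X then -δ v else δ v
  rw [cutEnergy_flip] at h
  linarith

end MaxCut

/-! ### Redistribution along a maximum cut -/

section Greedy

variable {V α : Type*} (K : SimpleGraph V) (f : V → ℕ → α)

theorem exists_greedy_label [Fintype V] [LinearOrder V] (hf : ∀ v, (f v).Injective) :
    ∃ k : V → ℕ, (∀ u, k u ≤ #{v | v < u ∧ K.Adj u v}) ∧
      ∀ u v, K.Adj u v → f u (k u) ≠ f v (k v) := by
  suffices h : ∀ s : Finset V, ∃ k : V → ℕ, (∀ u, k u ≤ #{v | v < u ∧ K.Adj u v}) ∧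
      ∀ u ∈ s, ∀ v ∈ s, K.Adj u v → f u (k u) ≠ f v (k v) by
    obtain ⟨k, hle, hne⟩ := h univ
    exact ⟨k, hle, fun u v => hne u (mem_univ u) v (mem_univ v)⟩
  intro s
  induction s using Finset.induction_on_max with
  | empty => exact ⟨0, fun _ => Nat.zero_le _, by simp⟩
  | insert a s hlt ih =>
    obtain ⟨k, hle, hne⟩ := ih
    set back : Finset V := {v | v < a ∧ K.Adj a v} with hback
    obtain ⟨_, hmem, hfree⟩ : ∃ x ∈ (range (#back + 1)).image (f a),
        x ∉ back.image fun v => f v (k v) := by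
      refine exists_mem_notMem_of_card_lt_card ?_
      rw [card_image_of_injective _ (hf a), card_range]
      exact Nat.lt_succ_of_le card_image_le
    obtain ⟨i, hi, rfl⟩ := mem_image.1 hmem
    have hnew : ∀ v ∈ s, K.Adj a v → f a i ≠ f v (k v) := fun v hv hav heq =>
      hfree (mem_image.2 ⟨v, mem_filter.2 ⟨mem_univ v, hlt v hv, hav⟩, heq.symm⟩)
    have hupd : ∀ v ∈ s, Function.update k a i v = k v := fun v hv =>
      Function.update_of_ne (hlt v hv).ne _ _
    refine ⟨Function.update k a i, fun u => ?_, fun u hu v hv huv => ?_⟩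
    · rcases eq_or_ne u a with rfl | hu
      · rw [Function.update_self]
        exact Nat.le_of_lt_succ (mem_range.1 hi)
      · rw [Function.update_of_ne hu]
        exact hle u
    · rcases mem_insert.1 hu with rfl | hus <;> rcases mem_insert.1 hv with rfl | hvs
      · exact (huv.ne rfl).elim
      · rw [Function.update_self, hupd v hvs]
        exact hnew v hvs huv
      · rw [Function.update_self, hupd u hus]
        exact (hnew u hus huv.symm).symm
      · rw [hupd u hus, hupd v hvs]
        exact hne u hus v hvs huv

theorem exists_greedy_selection [Finite V] (hf : ∀ v, (f v).Injective) :
    ∃ M : V → Finset V, (∀ u, ∀ v ∈ M u, K.Adj u v) ∧ (∀ u v, v ∈ M u → u ∉ M v) ∧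
      ∀ u v, K.Adj u v → f u #(M u) ≠ f v #(M v) := by
  have := Fintype.ofFinite V
  let _ : LinearOrder V := LinearOrder.lift' (Fintype.equivFin V) (Fintype.equivFin V).injective
  obtain ⟨k, hle, hne⟩ := exists_greedy_label K f hf
  choose M hsub hcard using fun u => exists_subset_card_eq (hle u)
  have hM : ∀ {u v}, v ∈ M u → v < u ∧ K.Adj u v := fun hv => (mem_filter.1 (hsub _ hv)).2
  refine ⟨M, fun u v hv => (hM hv).2, fun u v hv hu => (hM hv).1.asymm (hM hu).1, ?_⟩
  simpa only [hcard] using hne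

end Greedy

section Redistribution

variable {V : Type*} {K : SimpleGraph V} {δ : V → ℤˣ}

theorem sum_sum_eq_sum_sum_compl_of_antisymm [Fintype V] {a : V → V → ℤ}
    (ha : ∀ u v, a v u = -a u v) (X : Finset V) :
    ∑ u ∈ X, ∑ v, a u v = ∑ u ∈ X, ∑ v ∈ Xᶜ, a u v := by
  have hinner : ∑ u ∈ X, ∑ v ∈ X, a u v = 0 := by
    have hneg : ∑ u ∈ X, ∑ v ∈ X, a u v = -∑ u ∈ X, ∑ v ∈ X, a u v := by
      refine sum_comm.trans ?_
      simp only [← sum_neg_distrib]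
      exact sum_congr rfl fun u _ => sum_congr rfl fun v _ => ha u v
    linarith
  rw [sum_congr rfl fun u _ => (sum_add_sum_compl X (a u)).symm, sum_add_distrib, hinner, zero_add]

theorem IsMaxCut.sum_uncut_le_sum_cut [Fintype V] (hδ : IsMaxCut K δ) (X : Finset V) :
    ∑ u ∈ X, ∑ v ∈ Xᶜ, (if K.Adj u v ∧ δ u = δ v then 1 else 0 : ℤ) ≤
      ∑ u ∈ X, ∑ v ∈ Xᶜ, (if K.Adj u v ∧ δ u ≠ δ v then 1 else 0 : ℤ) := by
  rw [← sub_nonpos]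
  simp only [← sum_sub_distrib]
  convert hδ.sum_switch_nonpos X using 4 with u _ v _
  rcases Int.units_eq_one_or (δ u) with hu | hu <;>
    rcases Int.units_eq_one_or (δ v) with hv | hv <;> by_cases huv : K.Adj u v <;>
      simp [hu, hv, huv]

theorem IsMaxCut.exists_balancing_flow [Fintype V] (hδ : IsMaxCut K δ) {t : V → V → ℤ}
    (ht0 : ∀ u v, 0 ≤ t u v)
    (ht1 : ∀ u v, t u v + t v u ≤ if K.Adj u v ∧ δ u = δ v then 1 else 0) :
    ∃ p : V → V → ℕ, (∀ u v, p u v ≤ if K.Adj u v ∧ δ u ≠ δ v then 1 else 0) ∧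
      ∀ u, ∑ v, (p u v : ℤ) - ∑ v, (p v u : ℤ) = ∑ v, (t u v - t v u) := by
  have hnet : ∀ X : Finset V, ∑ u ∈ X, ∑ v, (t u v - t v u) = ∑ u ∈ X, ∑ v ∈ Xᶜ, (t u v - t v u) :=
    sum_sum_eq_sum_sum_compl_of_antisymm fun u v => (neg_sub _ _).symm
  refine exists_flow_of_supply_le_cut _ _ (by simpa using hnet univ) fun X => ?_
  calc ∑ u ∈ X, ∑ v, (t u v - t v u) = ∑ u ∈ X, ∑ v ∈ Xᶜ, (t u v - t v u) := hnet X
    _ ≤ ∑ u ∈ X, ∑ v ∈ Xᶜ, (if K.Adj u v ∧ δ u = δ v then 1 else 0 : ℤ) :=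
        sum_le_sum fun u _ => sum_le_sum fun v _ => by linarith [ht0 v u, ht1 u v]
    _ ≤ ∑ u ∈ X, ∑ v ∈ Xᶜ, (if K.Adj u v ∧ δ u ≠ δ v then 1 else 0 : ℤ) :=
        hδ.sum_uncut_le_sum_cut X
    _ = _ := by push_cast; rfl

/-- The edge weighting in which `u` receives `δ u` for every unit that `t` sends from or to `u` and
that `p` sends from `u`, and pays `δ u` for every unit that `p` sends to `u`. -/
def transferWeight (δ : V → ℤˣ) (t : V → V → ℤ) (p : V → V → ℕ) : V → V → ℤ :=
  fun u v => δ u * (t u v + t v u + p u v - p v u)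

theorem isEdgeWeight_transferWeight {t : V → V → ℤ} {p : V → V → ℕ} (ht0 : ∀ u v, 0 ≤ t u v)
    (ht1 : ∀ u v, t u v + t v u ≤ if K.Adj u v ∧ δ u = δ v then 1 else 0)
    (hp1 : ∀ u v, p u v ≤ if K.Adj u v ∧ δ u ≠ δ v then 1 else 0) :
    IsEdgeWeight K (transferWeight δ t p) ∧ ∀ u v, |transferWeight δ t p u v| ≤ 1 := by
  have ht : ∀ u v, t u v + t v u ≠ 0 → K.Adj u v ∧ δ u = δ v ∧ t u v + t v u = 1 := by
    intro u v h0
    have := ht1 u v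
    have := ht0 u v
    have := ht0 v u
    split_ifs at * with h
    · exact ⟨h.1, h.2, by omega⟩
    · omega
  have hp : ∀ u v, p u v ≠ 0 → K.Adj u v ∧ δ u ≠ δ v ∧ p u v = 1 := by
    intro u v h0
    have := hp1 u v
    split_ifs at * with h
    · exact ⟨h.1, h.2, by omega⟩
    · omega
  refine ⟨⟨fun u v => ?_, fun {u v} huv => ?_⟩, fun u v => ?_⟩ <;> unfold transferWeight
  · by_cases hδuv : δ u = δ v
    · rw [hδuv]
      have := hp u v
      have := hp v u
      grind
    · have h0 : t u v + t v u = 0 := by_contra fun h => hδuv (ht u v h).2.1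
      rw [Int.units_ne_iff_eq_neg.1 hδuv, Units.val_neg]
      linear_combination -2 * (δ v : ℤ) * h0
  · have := ht u v
    have := hp u v
    have := hp v u
    grind [K.adj_comm]
  · rw [abs_mul, Int.isUnit_iff_abs_eq.1 (δ u).isUnit, one_mul, abs_le]
    have := ht u v
    have := hp u v
    have := hp v u
    grind

/-- Each vertex `u` first receives `δ u` on `k u` uncut edges of its own choice, `k` being chosen
greedily; a flow across the cut then restores the balance, because in a maximum cut no vertex set
is left by more uncut than cut edges. -/
theorem IsMaxCut.exists_redistribution [Fintype V] (hδ : IsMaxCut K δ) (β : V → ℤ) :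
    ∃ (h : V → V → ℤ) (k : V → ℕ), IsEdgeWeight K h ∧ (∀ u v, |h u v| ≤ 1) ∧
      (∀ u, ∑ v, h u v = 2 * δ u * k u) ∧
      ∀ u v, K.Adj u v → δ u = δ v → β u + 2 * δ u * k u ≠ β v + 2 * δ v * k v := by
  let uncut : SimpleGraph V :=
    { Adj := fun u v => K.Adj u v ∧ δ u = δ v
      symm := ⟨fun u v huv => ⟨huv.1.symm, huv.2.symm⟩⟩
      loopless := ⟨fun u huu => huu.1.ne rfl⟩ }
  obtain ⟨M, hadj, hasymm, hne⟩ := exists_greedy_selection uncut (fun u i => β u + 2 * δ u * i)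
    (fun u i j hij => by
      have hδu : (2 * δ u : ℤ) ≠ 0 := mul_ne_zero two_ne_zero (δ u).ne_zero
      exact_mod_cast mul_left_cancel₀ hδu (add_left_cancel hij))
  let t : V → V → ℤ := fun u v => if v ∈ M u then 1 else 0
  have ht0 : ∀ u v, 0 ≤ t u v := fun u v => by positivity
  have ht1 : ∀ u v, t u v + t v u ≤ if K.Adj u v ∧ δ u = δ v then 1 else 0 := by
    intro u v
    have hu : v ∈ M u → K.Adj u v ∧ δ u = δ v := hadj u v
    have hv : u ∈ M v → K.Adj u v ∧ δ u = δ v := fun h => (hadj v u h).symm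
    have huv := hasymm u v
    grind
  obtain ⟨p, hple, hp⟩ := hδ.exists_balancing_flow ht0 ht1
  obtain ⟨hw, hbound⟩ := isEdgeWeight_transferWeight ht0 ht1 hple
  refine ⟨transferWeight δ t p, fun u => #(M u), hw, hbound, fun u => ?_,
    fun u v huv hδuv => hne u v ⟨huv, hδuv⟩⟩
  have hsum : ∑ v, t u v = #(M u) := by simp [t]
  have hpu := hp u
  simp only [transferWeight, sum_add_distrib, sum_sub_distrib, ← mul_sum] at hpu ⊢
  linear_combination (δ u : ℤ) * (hpu + 2 * hsum)

end Redistribution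

section Completion

variable {V : Type*} [Fintype V] {G : SimpleGraph V} {B : Set V} {δ : V → ℤˣ} {j : V → V → ℤ}

theorem sum_eq_zero_of_notMem {h : V → V → ℤ} (hh : IsEdgeWeight (G.between B B) h) {u : V}
    (hu : u ∉ B) : ∑ v, h u v = 0 :=
  sum_eq_zero fun _ _ => hh.eq_zero fun huv => hu ((between_adj.1 huv).2.elim And.left And.left)

/-- A weighting `j` that is odd with the sign of `δ` on `B` only has to be corrected inside `B`;
redistributing along a maximum cut `δ` of `G[B]` preserves parities and signs. -/
theorem hasSumDistinguishingWeighting_of_isMaxCut (hδ : IsMaxCut (G.between B B) δ)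
    (hj : IsEdgeWeight G j) (hj1 : ∀ u v, |j u v| ≤ 1) (hjB : ∀ u ∈ B, ∀ v ∈ B, j u v = 0)
    (hodd : ∀ v ∈ B, Odd (∑ y, j v y)) (hsign : ∀ v ∈ B, 0 ≤ δ v * ∑ y, j v y)
    (heven : ∀ v ∉ B, Even (∑ y, j v y))
    (hne : ∀ u ∉ B, ∀ v ∉ B, G.Adj u v → ∑ y, j u y ≠ ∑ y, j v y) :
    HasSumDistinguishingWeighting G := by
  obtain ⟨h, k, hh, hh1, hsum, hsame⟩ := hδ.exists_redistribution fun u => ∑ y, j u y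
  have hout : ∀ v ∉ B, ∑ y, (j + h) v y = ∑ y, j v y := fun v hv => by
    simp only [Pi.add_apply, sum_add_distrib, sum_eq_zero_of_notMem hh hv, add_zero]
  have hin : ∀ v, ∑ y, (j + h) v y = ∑ y, j v y + 2 * δ v * k v := fun v => by
    simp only [Pi.add_apply, sum_add_distrib, hsum]
  have hinodd : ∀ v ∈ B, Odd (∑ y, (j + h) v y) := fun v hv => by
    rw [hin, mul_assoc]
    exact (hodd v hv).add_even (even_two_mul _)
  have hpos : ∀ v ∈ B, 0 < δ v * ∑ y, (j + h) v y := fun v hv => by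
    have hne0 : δ v * ∑ y, (j + h) v y ≠ 0 := mul_ne_zero (δ v).ne_zero fun h0 =>
      Int.not_odd_zero (h0 ▸ hinodd v hv)
    have hexp : δ v * ∑ y, (j + h) v y = δ v * ∑ y, j v y + 2 * k v := by
      rw [hin]
      linear_combination 2 * (k v : ℤ) * Int.units_coe_mul_self (δ v)
    have := hsign v hv
    omega
  refine ⟨j + h, hj.add (hh.mono between_le), fun u v => ?_, fun u v huv heq => ?_⟩
  · by_cases huv : h u v = 0
    · simpa only [Pi.add_apply, huv, add_zero] using hj1 u v
    · have hB := (between_adj.1 (hh.adj huv)).2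
      simpa only [Pi.add_apply, hjB u (hB.elim And.left And.left) v (hB.elim And.right And.right),
        zero_add] using hh1 u v
  · by_cases hu : u ∈ B <;> by_cases hv : v ∈ B
    · rcases eq_or_ne (δ u) (δ v) with hδuv | hδuv
      · exact hsame u v (between_adj.2 ⟨huv, Or.inl ⟨hu, hv⟩⟩) hδuv (by rw [← hin, ← hin, heq])
      · have := hpos u hu
        have := hpos v hv
        rw [heq, Int.units_ne_iff_eq_neg.1 hδuv, Units.val_neg] at *
        linarith
    · exact (Int.not_even_iff_odd.2 (hinodd u hu)) (heq ▸ hout v hv ▸ heven v hv)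
    · exact (Int.not_even_iff_odd.2 (hinodd v hv)) (heq ▸ hout u hu ▸ heven u hu)
    · exact hne u hu v hv huv (by rw [← hout u hu, ← hout v hv, heq])

end Completion

/-! ### Signed joins in the bipartite graph between `I` and its complement -/

theorem intCast_intUnits (ε : ℤˣ) : ((ε : ℤ) : ZMod 2) = 1 := by
  rcases Int.units_eq_one_or ε with h | h <;> rw [h] <;> rfl

section SignedWeight

variable {V : Type*} {G : SimpleGraph V} {I : Set V} {δ δ' : V → ℤˣ} {w : V → V → ZMod 2}

/-- The integral weighting that lifts the edge weighting `w` of the graph between `I` and `Iᶜ`, an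
edge receiving the sign that `δ` gives to its endpoint outside `I`. -/
noncomputable def signedWeight (I : Set V) (δ : V → ℤˣ) (w : V → V → ZMod 2) (u v : V) : ℤ :=
  if w u v = 0 then 0 else if u ∈ I then δ v else δ u

theorem between_compl_adj {u v : V} :
    (G.between I Iᶜ).Adj u v ↔ G.Adj u v ∧ (u ∈ I ↔ v ∉ I) := by
  rw [between_adj, Set.mem_compl_iff, Set.mem_compl_iff]
  tauto

theorem isEdgeWeight_signedWeight (hw : IsEdgeWeight (G.between I Iᶜ) w) :
    IsEdgeWeight (G.between I Iᶜ) (signedWeight I δ w) where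
  symm u v := by
    simp only [signedWeight, hw.symm v u]
    split_ifs with h0 hu hv hv
    · rfl
    · exact absurd hv ((between_compl_adj.1 (hw.adj h0)).2.1 hu)
    · rfl
    · rfl
    · exact absurd ((between_compl_adj.1 (hw.adj h0)).2.2 hv) hu
  eq_zero huv := if_pos (hw.eq_zero huv)

theorem abs_signedWeight_le_one (u v : V) : |signedWeight I δ w u v| ≤ 1 := by
  unfold signedWeight
  split_ifs
  · rw [abs_zero]
    exact zero_le_one
  all_goals exact (Int.isUnit_iff_abs_eq.1 (Units.isUnit _)).le

theorem signedWeight_congr (hw : IsEdgeWeight (G.between I Iᶜ) w) (h : ∀ v ∉ I, δ v = δ' v) :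
    signedWeight I δ w = signedWeight I δ' w := by
  ext u v
  unfold signedWeight
  split_ifs with h0 hu
  · rfl
  · rw [h v ((between_compl_adj.1 (hw.adj h0)).2.1 hu)]
  · rw [h u hu]

theorem intCast_signedWeight (u v : V) : (signedWeight I δ w u v : ZMod 2) = w u v := by
  unfold signedWeight
  split_ifs with h0 hu
  · rw [h0, Int.cast_zero]
  all_goals rw [intCast_intUnits]; exact (Fin.eq_one_of_ne_zero _ h0).symm

variable [Fintype V]

theorem intCast_sum_signedWeight (u : V) :
    ((∑ v, signedWeight I δ w u v : ℤ) : ZMod 2) = ∑ v, w u v := by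
  simp only [Int.cast_sum, intCast_signedWeight]

theorem mul_sum_signedWeight_nonneg {u : V} (hu : u ∉ I) :
    0 ≤ δ u * ∑ v, signedWeight I δ w u v := by
  rw [mul_sum]
  refine sum_nonneg fun v _ => ?_
  unfold signedWeight
  split_ifs
  · rw [mul_zero]
  · rw [Int.units_coe_mul_self]
    exact zero_le_one

theorem hasSumDistinguishingWeighting_of_even {r : V} (hI : G.IsIndepSet I)
    (hH : ∀ v ∉ I, (G.between I Iᶜ).Reachable r v) (heven : Even #{v | v ∉ I}) :
    HasSumDistinguishingWeighting G := by
  obtain ⟨δ, hδ⟩ := exists_isMaxCut (G.between Iᶜ Iᶜ)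
  obtain ⟨w, hw⟩ : ∃ w, IsJoin (G.between I Iᶜ) (fun v => if v ∉ I then 1 else 0) w :=
    exists_join r (by rwa [sum_boole, ZMod.natCast_eq_zero_iff_even])
      fun v hv => hH v (by_contra fun h => hv (if_neg h))
  have hcast : ∀ u, ((∑ v, signedWeight I δ w u v : ℤ) : ZMod 2) = if u ∉ I then 1 else 0 :=
    fun u => by rw [intCast_sum_signedWeight, hw.sum_eq]
  have hj := isEdgeWeight_signedWeight (δ := δ) hw.toIsEdgeWeight
  refine hasSumDistinguishingWeighting_of_isMaxCut hδ (hj.mono between_le)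
    abs_signedWeight_le_one (fun u hu v hv => hj.eq_zero fun huv => ?_) (fun v hv => ?_)
    (fun v => mul_sum_signedWeight_nonneg) (fun v hv => ?_) (fun u hu v hv huv => ?_)
  · exact hu ((between_compl_adj.1 huv).2.2 hv)
  · rw [← ZMod.intCast_eq_one_iff_odd, hcast]
    exact if_pos hv
  · rw [← ZMod.intCast_eq_zero_iff_even, hcast]
    exact if_neg hv
  · exact absurd huv (hI (not_not.1 hu) (not_not.1 hv) huv.ne)

end SignedWeight

section Star

variable {V : Type*} {G : SimpleGraph V} {S : Finset V} {z : V} {e : V → ℤˣ}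

/-- The weighting of the star with centre `z` and leaves `S` that gives the edge `zv` the
weight `e v`. -/
noncomputable def starWeight (z : V) (S : Finset V) (e : V → ℤˣ) (u v : V) : ℤ :=
  (if u = z ∧ v ∈ S then (e v : ℤ) else 0) + if v = z ∧ u ∈ S then (e u : ℤ) else 0

theorem isEdgeWeight_starWeight (hS : ∀ v ∈ S, G.Adj z v) :
    IsEdgeWeight G (starWeight z S e) where
  symm u v := add_comm _ _
  eq_zero {u v} huv := by
    have hu : ¬(u = z ∧ v ∈ S) := by rintro ⟨rfl, hv⟩; exact huv (hS v hv)
    have hv : ¬(v = z ∧ u ∈ S) := by rintro ⟨rfl, hmem⟩; exact huv (hS u hmem).symm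
    rw [starWeight, if_neg hu, if_neg hv, add_zero]

theorem starWeight_eq_zero {u v : V} (hu : u ≠ z) (hv : v ≠ z) : starWeight z S e u v = 0 := by
  simp only [starWeight, hu, hv, false_and, if_false, add_zero]

theorem abs_starWeight_le_one (hz : z ∉ S) (u v : V) : |starWeight z S e u v| ≤ 1 := by
  have habs : ∀ x, |(e x : ℤ)| = 1 := fun x => Int.isUnit_iff_abs_eq.1 (e x).isUnit
  unfold starWeight
  split_ifs with hu hv hv
  · exact absurd (hv.1 ▸ hu.2) hz
  · rw [add_zero, habs]
  · rw [zero_add, habs]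
  · rw [add_zero, abs_zero]
    exact zero_le_one

theorem sum_starWeight_center [Fintype V] (hz : z ∉ S) :
    ∑ v, starWeight z S e z v = ∑ v ∈ S, (e v : ℤ) := by
  simp [starWeight, hz]

theorem sum_starWeight_of_ne [Fintype V] {u : V} (hu : u ≠ z) :
    ∑ v, starWeight z S e u v = if u ∈ S then (e u : ℤ) else 0 := by
  simp [starWeight, hu, ite_and]

end Star

section Punctured

variable {V : Type*} {G : SimpleGraph V} {I : Set V} {z : V} {S : Finset V}
  {δ : V → ℤˣ} {w : V → V → ZMod 2}

/-- The bipartite graph between `I` and `Iᶜ`, with the vertex `z` isolated. -/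
abbrev punctured (G : SimpleGraph V) (I : Set V) (z : V) : SimpleGraph V :=
  (G.between I Iᶜ).deleteIncidenceSet z

/-- The join parities for which a signed join, completed by the star from `z` to `S`, has odd
vertex sums exactly outside `I ∪ {z}`. -/
noncomputable def puncturedParity (I : Set V) (z : V) (S : Finset V) (v : V) : ZMod 2 :=
  (if v ∈ insert z I then 0 else 1) + if v ∈ S then 1 else 0

theorem punctured_adj {u v : V} : (punctured G I z).Adj u v ↔
    G.Adj u v ∧ (u ∈ I ↔ v ∉ I) ∧ u ≠ z ∧ v ≠ z := by
  rw [deleteIncidenceSet_adj, between_compl_adj, and_assoc]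

/-- A signed join completed by the star from `z` to `S`. -/
noncomputable def puncturedWeight (I : Set V) (z : V) (S : Finset V) (δ : V → ℤˣ)
    (w : V → V → ZMod 2) : V → V → ℤ :=
  signedWeight I δ w + starWeight z S δ

theorem signedWeight_eq_zero_of_punctured (hw : IsEdgeWeight (punctured G I z) w) {u v : V}
    (huv : u = z ∨ v = z) : signedWeight I δ w u v = 0 :=
  if_pos (hw.eq_zero fun h =>
    huv.elim (punctured_adj.1 h).2.2.1 (punctured_adj.1 h).2.2.2)

theorem isEdgeWeight_puncturedWeight (hw : IsEdgeWeight (punctured G I z) w)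
    (hS : ∀ v ∈ S, G.Adj z v) : IsEdgeWeight G (puncturedWeight I z S δ w) :=
  ((isEdgeWeight_signedWeight (hw.mono (deleteIncidenceSet_le _ z))).mono between_le).add
    (isEdgeWeight_starWeight hS)

theorem abs_puncturedWeight_le_one (hw : IsEdgeWeight (punctured G I z) w) (hz : z ∉ S)
    (u v : V) : |puncturedWeight I z S δ w u v| ≤ 1 := by
  simp only [puncturedWeight, Pi.add_apply]
  by_cases huv : u = z ∨ v = z
  · rw [signedWeight_eq_zero_of_punctured hw huv, zero_add]
    exact abs_starWeight_le_one hz u v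
  · rw [not_or] at huv
    rw [starWeight_eq_zero huv.1 huv.2, add_zero]
    exact abs_signedWeight_le_one u v

theorem puncturedWeight_eq_zero (hw : IsEdgeWeight (punctured G I z) w) {u v : V}
    (hu : u ∉ insert z I) (hv : v ∉ insert z I) : puncturedWeight I z S δ w u v = 0 := by
  rw [Set.mem_insert_iff, not_or] at hu hv
  simp only [puncturedWeight, Pi.add_apply]
  rw [starWeight_eq_zero hu.1 hv.1, add_zero]
  exact if_pos (hw.eq_zero fun h => hu.2 ((punctured_adj.1 h).2.1.2 hv.2))

variable [Fintype V]

theorem sum_puncturedWeight_center (hw : IsEdgeWeight (punctured G I z) w) (hz : z ∉ S) :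
    ∑ v, puncturedWeight I z S δ w z v = ∑ v ∈ S, (δ v : ℤ) := by
  simp only [puncturedWeight, Pi.add_apply, sum_starWeight_center hz,
    signedWeight_eq_zero_of_punctured hw (Or.inl rfl), zero_add]

theorem sum_puncturedWeight_of_ne {u : V} (hu : u ≠ z) :
    ∑ v, puncturedWeight I z S δ w u v =
      ∑ v, signedWeight I δ w u v + if u ∈ S then (δ u : ℤ) else 0 := by
  simp only [puncturedWeight, Pi.add_apply, sum_add_distrib, sum_starWeight_of_ne hu]

theorem IsJoin.odd_sum_puncturedWeight_iff (hw : IsJoin (punctured G I z) (puncturedParity I z S) w)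
    (hz : z ∉ S) (hS : Even #S) (u : V) :
    Odd (∑ v, puncturedWeight I z S δ w u v) ↔ u ∉ insert z I := by
  rw [← ZMod.intCast_eq_one_iff_odd]
  rcases eq_or_ne u z with rfl | hu
  · have hcard : (#S : ZMod 2) = 0 := ZMod.natCast_eq_zero_iff_even.2 hS
    simp [sum_puncturedWeight_center hw.toIsEdgeWeight hz, intCast_intUnits, hcard]
  · rw [sum_puncturedWeight_of_ne hu, Int.cast_add, intCast_sum_signedWeight, hw.sum_eq,
      puncturedParity, Int.cast_ite, intCast_intUnits, Int.cast_zero, add_assoc,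
      ZModModule.add_self, add_zero]
    split_ifs with h <;> simp [h]

theorem hasSumDistinguishingWeighting_of_punctured (hI : G.IsIndepSet I)
    (hδ : IsMaxCut (G.between (insert z I)ᶜ (insert z I)ᶜ) δ) (hS : ∀ v ∈ S, G.Adj z v)
    (hSeven : Even #S) (hw : IsJoin (punctured G I z) (puncturedParity I z S) w)
    (hne : ∀ x ∈ I, G.Adj z x →
      ∑ y, signedWeight I δ w x y + (if x ∈ S then (δ x : ℤ) else 0) ≠ ∑ v ∈ S, (δ v : ℤ)) :
    HasSumDistinguishingWeighting G := by
  have hz : z ∉ S := fun h => (hS z h).ne rfl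
  have hodd := hw.odd_sum_puncturedWeight_iff (δ := δ) hz hSeven
  have hstar : ∀ x ∈ I, G.Adj z x →
      ∑ y, puncturedWeight I z S δ w x y ≠ ∑ y, puncturedWeight I z S δ w z y := by
    intro x hx hzx
    rw [sum_puncturedWeight_of_ne hzx.ne', sum_puncturedWeight_center hw.toIsEdgeWeight hz]
    exact hne x hx hzx
  refine hasSumDistinguishingWeighting_of_isMaxCut hδ
    (isEdgeWeight_puncturedWeight hw.toIsEdgeWeight hS)
    (abs_puncturedWeight_le_one hw.toIsEdgeWeight hz)
    (fun u hu v hv => puncturedWeight_eq_zero hw.toIsEdgeWeight hu hv)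
    (fun v hv => (hodd v).2 hv) (fun v hv => ?_)
    (fun v hv => Int.not_odd_iff_even.1 fun h => hv ((hodd v).1 h)) (fun u hu v hv huv => ?_)
  · rw [Set.mem_compl_iff, Set.mem_insert_iff, not_or] at hv
    rw [sum_puncturedWeight_of_ne hv.1, mul_add]
    refine add_nonneg (mul_sum_signedWeight_nonneg hv.2) ?_
    split_ifs
    · rw [Int.units_coe_mul_self]
      exact zero_le_one
    · rw [mul_zero]
  · rcases not_not.1 hu with rfl | huI <;> rcases not_not.1 hv with rfl | hvI
    · exact (huv.ne rfl).elim
    · exact (hstar v hvI huv).symm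
    · exact hstar u huI huv.symm
    · exact absurd huv (hI huI hvI huv.ne)

end Punctured

section SignChoice

variable {α : Type*}

theorem abs_sum_intUnits_le (s : Finset α) (ε : α → ℤˣ) : |∑ i ∈ s, (ε i : ℤ)| ≤ #s := by
  refine (abs_sum_le_sum_abs _ _).trans_eq ?_
  rw [card_eq_sum_ones, Nat.cast_sum]
  exact sum_congr rfl fun i _ => Int.isUnit_iff_abs_eq.1 (ε i).isUnit

theorem sum_insert_insert_ne_add {t : Finset α} {i k : α} {c : α → ℤ} {ε : α → ℤˣ}
    (hit : i ∉ insert k t) (hkt : k ∉ t) (hci : #t < c i) (hck : c k < -#t) (hεi : ε i = 1)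
    (hεk : ε k = -1) (ht : ∀ j ∈ t, ∑ x ∈ t, (ε x : ℤ) ≠ c j + ε j) :
    ∀ j ∈ insert i (insert k t), ∑ x ∈ insert i (insert k t), (ε x : ℤ) ≠ c j + ε j := by
  have hlo := neg_le_of_abs_le (abs_sum_intUnits_le t ε)
  have hhi := le_of_abs_le (abs_sum_intUnits_le t ε)
  intro j hj hcj
  rw [sum_insert hit, sum_insert hkt, hεi, hεk, Units.val_neg, Units.val_one,
    add_neg_cancel_left] at hcj
  rw [mem_insert, mem_insert] at hj
  rcases hj with rfl | rfl | hj
  · rw [hεi, Units.val_one] at hcj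
    omega
  · rw [hεk, Units.val_neg, Units.val_one] at hcj
    omega
  · exact ht j hj hcj

/-- If neither constant sign works, then one constraint forbids the largest and another one the
smallest possible sum; giving these two opposite signs satisfies both and cancels in all others. -/
theorem exists_sum_ne_add (s : Finset α) (c : α → ℤ) (hc : ∀ m, s = {m} → c m ≠ 0) :
    ∃ ε : α → ℤˣ, ∀ i ∈ s, ∑ j ∈ s, (ε j : ℤ) ≠ c i + ε i := by
  induction s using Finset.strongInduction with
  | H s ih =>
    by_contra! hfail
    obtain ⟨i, hi, hci⟩ := hfail fun _ => 1
    obtain ⟨k, hk, hck⟩ := hfail fun _ => -1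
    simp only [Units.val_one, Units.val_neg, sum_const, nsmul_eq_mul, mul_one, mul_neg] at hci hck
    have hik : i ≠ k := by
      rintro rfl
      obtain ⟨m, rfl⟩ := card_eq_one.1 (show #s = 1 by omega)
      obtain rfl := mem_singleton.1 hi
      exact hc i rfl (by omega)
    obtain ⟨t, hit, rfl⟩ : ∃ t, i ∉ t ∧ insert i t = s := ⟨_, notMem_erase i s, insert_erase hi⟩
    obtain ⟨t, hkt, rfl⟩ : ∃ t', k ∉ t' ∧ insert k t' = t :=
      ⟨_, notMem_erase k t, insert_erase ((mem_insert.1 hk).resolve_left hik.symm)⟩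
    have hcard : #(insert i (insert k t)) = #t + 2 := by
      rw [card_insert_of_notMem hit, card_insert_of_notMem hkt]
    by_cases hct : ∀ m, t = {m} → c m ≠ 0
    · obtain ⟨ε, hε⟩ := ih t ((ssubset_insert hkt).trans (ssubset_insert hit)) hct
      have hupdate : ∀ x ∈ t, Function.update (Function.update ε i 1) k (-1) x = ε x := by
        grind
      obtain ⟨j, hj, hcj⟩ := hfail (Function.update (Function.update ε i 1) k (-1))
      refine sum_insert_insert_ne_add hit hkt (by omega) (by omega)
        (by rw [Function.update_of_ne hik, Function.update_self]) (Function.update_self ..)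
        (fun j hj => ?_) j hj hcj
      rw [sum_congr rfl fun x hx => congrArg Units.val (hupdate x hx), hupdate j hj]
      exact hε j hj
    · push Not at hct
      obtain ⟨m, rfl, hcm⟩ := hct
      rw [card_singleton] at hcard
      rw [mem_insert, mem_singleton, not_or] at hit
      rw [mem_singleton] at hkt
      obtain ⟨j, hj, hcj⟩ := hfail (Function.update (fun _ => 1) m (-1))
      rw [mem_insert, mem_insert, mem_singleton] at hj
      rcases hj with rfl | rfl | rfl <;> simp [hit, hkt] at hcj <;> omega

end SignChoice

section PuncturedJoin

variable {V : Type*} [Fintype V] {G : SimpleGraph V} {I : Set V} {z : V} {S : Finset V}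

theorem sum_puncturedParity (hodd : Odd #{v | v ∉ I}) (hz : z ∉ I) (hS : Even #S) :
    ∑ v, puncturedParity I z S v = 0 := by
  have hcard : (univ.filter fun v => v ∉ insert z I) = (univ.filter fun v => v ∉ I).erase z := by
    ext v
    simp [not_or]
  have heven : Even #{v | v ∉ insert z I} := by
    rw [hcard, card_erase_of_mem (mem_filter.2 ⟨mem_univ z, hz⟩)]
    exact Nat.Odd.sub_odd hodd odd_one
  simp only [puncturedParity, sum_add_distrib, ← ite_not (_ ∈ insert z I), sum_boole,
    filter_univ_mem]
  rw [ZMod.natCast_eq_zero_iff_even.2 heven, ZMod.natCast_eq_zero_iff_even.2 hS, add_zero]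

theorem exists_punctured_join {r : V} (hr : ∀ v ≠ z, (punctured G I z).Reachable r v)
    (hodd : Odd #{v | v ∉ I}) (hzI : z ∉ I) (hz : z ∉ S) (hS : Even #S) :
    ∃ w, IsJoin (punctured G I z) (puncturedParity I z S) w := by
  refine exists_join r (sum_puncturedParity hodd hzI hS) fun v hv => hr v ?_
  rintro rfl
  exact hv (by rw [puncturedParity, if_pos (Set.mem_insert _ _), if_neg hz, add_zero])

/-- The set `A`, or `A` with the new element `a` added, whichever has even cardinality. -/
noncomputable def evenPad {α : Type*} (a : α) (A : Finset α) : Finset α :=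
  if Even #A then A else insert a A

theorem even_card_evenPad {α : Type*} {a : α} {A : Finset α} (ha : a ∉ A) :
    Even #(evenPad a A) := by
  unfold evenPad
  split_ifs with h
  · exact h
  · rw [card_insert_of_notMem ha]
    exact (Nat.not_even_iff_odd.1 h).add_one

theorem evenPad_subset_insert {α : Type*} (a : α) (A : Finset α) : evenPad a A ⊆ insert a A := by
  unfold evenPad
  split_ifs
  · exact subset_insert a A
  · exact Subset.rfl

theorem subset_evenPad {α : Type*} (a : α) (A : Finset α) : A ⊆ evenPad a A := by
  unfold evenPad
  split_ifs
  · exact Subset.rfl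
  · exact subset_insert a A

theorem mem_evenPad_of_ne {α : Type*} {a b : α} {A : Finset α} (hb : b ≠ a) :
    b ∈ evenPad a A ↔ b ∈ A :=
  ⟨fun h => mem_of_mem_insert_of_ne (evenPad_subset_insert a A h) hb, fun h => subset_evenPad a A h⟩

theorem sum_evenPad {α : Type*} {a : α} {A : Finset α} (ha : a ∉ A) (f : α → ℤ) :
    ∑ v ∈ evenPad a A, f v = ∑ v ∈ A, f v + if a ∈ evenPad a A then f a else 0 := by
  by_cases h : Even #A
  · rw [evenPad, if_pos h, if_neg ha, add_zero]
  · rw [evenPad, if_neg h, if_pos (mem_insert_self a A), sum_insert ha, add_comm]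

end PuncturedJoin

/-! ### Spanning bipartite graphs of independent sets -/

section Spanning

variable {V : Type*} {G : SimpleGraph V} {I : Set V}

theorem exists_adj_reachable_of_not_reachable {H : SimpleGraph V} (hconn : G.Connected) {r v : V}
    (hv : ¬H.Reachable r v) : ∃ a b, G.Adj a b ∧ H.Reachable r a ∧ ¬H.Reachable r b := by
  obtain ⟨p⟩ := hconn.preconnected r v
  obtain ⟨e, -, h₁, h₂⟩ := p.exists_boundary_dart {x | H.Reachable r x} (Reachable.refl r) hv
  exact ⟨e.fst, e.snd, e.adj, h₁, h₂⟩

theorem between_compl_insert_le {v : V} (hnbr : ∀ a ∈ I, ¬G.Adj a v) :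
    G.between I Iᶜ ≤ G.between (insert v I) (insert v I)ᶜ := by
  intro a b hab
  rw [between_compl_adj] at hab ⊢
  have := hab.1.symm
  grind

/-- Among the independent sets that contain `r` and whose vertices are reachable from `r` along
edges leaving the set, a maximal one reaches every vertex. -/
theorem exists_isIndepSet_connected_between [Finite V] (hconn : G.Connected) (r : V) :
    ∃ I : Set V, r ∈ I ∧ G.IsIndepSet I ∧ (G.between I Iᶜ).Connected := by
  obtain ⟨I, ⟨hr, hI, hreach⟩, hmax⟩ := (Set.toFinite {I : Set V | r ∈ I ∧ G.IsIndepSet I ∧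
    ∀ v ∈ I, (G.between I Iᶜ).Reachable r v}).exists_maximal ⟨{r}, Set.mem_singleton r,
      Set.pairwise_singleton _ _, fun v hv => hv ▸ Reachable.refl v⟩
  refine ⟨I, hr, hI, (connected_iff_exists_forall_reachable _).2 ⟨r, ?_⟩⟩
  by_contra! ⟨y, hy⟩
  obtain ⟨u, v, huv, hu, hv⟩ := exists_adj_reachable_of_not_reachable hconn hy
  have hvI : v ∉ I := fun h => hv (hreach v h)
  have hnbr : ∀ a ∈ I, ¬G.Adj a v := fun a ha hav =>
    hv ((hreach a ha).trans (between_compl_adj.2 ⟨hav, iff_of_true ha hvI⟩).reachable)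
  have hle := between_compl_insert_le hnbr
  have huI : u ∉ insert v I := by
    rintro (rfl | h)
    · exact huv.ne rfl
    · exact hnbr u h huv
  have hmem : v ∈ I := hmax ⟨Set.mem_insert_of_mem v hr, ?_, ?_⟩ (Set.subset_insert v I)
    (Set.mem_insert v I)
  · exact hvI hmem
  · refine Set.pairwise_insert.2 ⟨hI, fun a ha _ => ⟨fun h => hnbr a ha h.symm, hnbr a ha⟩⟩
  · rintro a (rfl | ha)
    · exact (hu.mono hle).trans (between_compl_adj.2
        ⟨huv, iff_of_false huI (not_not.2 (Set.mem_insert a I))⟩).reachable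
    · exact (hreach a ha).mono hle

theorem exists_adj_dist_add_one_eq {H : SimpleGraph V} (hH : H.Connected) {r v : V} (hv : v ≠ r) :
    ∃ y, H.Adj v y ∧ H.dist r y + 1 = H.dist r v := by
  obtain ⟨p, hp⟩ := hH.exists_walk_length_eq_dist v r
  cases p with
  | nil => exact (hv rfl).elim
  | @cons _ y _ hvy q =>
    refine ⟨y, hvy, le_antisymm ?_ ?_⟩
    · rw [H.dist_comm (u := r) (v := v), ← hp, Walk.length_cons, H.dist_comm]
      exact Nat.succ_le_succ (dist_le q)
    · exact hH.dist_triangle.trans_eq (by rw [dist_eq_one_iff_adj.2 hvy.symm])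

theorem exists_mem_adj_of_notMem (hH : (G.between I Iᶜ).Connected) {r b : V} (hr : r ∈ I)
    (hb : b ∉ I) : ∃ c ∈ I, G.Adj b c ∧
      (G.between I Iᶜ).dist r c + 1 = (G.between I Iᶜ).dist r b := by
  obtain ⟨c, hbc, hc⟩ := exists_adj_dist_add_one_eq hH (ne_of_mem_of_not_mem hr hb).symm
  have hbc' := between_compl_adj.1 hbc
  exact ⟨c, by_contra fun h => hb (hbc'.2.2 h), hbc'.1, hc⟩

/-- A walk from `r` towards a vertex of `K` first enters `K` through an exit edge. -/
theorem lt_dist_of_forall_exit {H : SimpleGraph V} (hH : H.Connected) {r : V} {K : Set V} {m : ℕ}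
    (hr : r ∉ K) (hexit : ∀ a ∈ K, ∀ b ∉ K, H.Adj a b → m ≤ H.dist r b) :
    ∀ v ∈ K, m < H.dist r v := by
  intro v hv
  obtain ⟨y, hvy, hy⟩ := exists_adj_dist_add_one_eq hH (ne_of_mem_of_not_mem hv hr)
  by_cases hyK : y ∈ K
  · exact (lt_dist_of_forall_exit hH hr hexit y hyK).trans (by omega)
  · have := hexit v hv y hyK hvy
    omega
termination_by v => H.dist r v

theorem ne_of_reachable_deleteIncidenceSet {H : SimpleGraph V} {x u v : V} (hu : u ≠ x)
    (hr : (H.deleteIncidenceSet x).Reachable u v) : v ≠ x := by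
  rintro rfl
  obtain ⟨p⟩ := hr.symm
  cases p with
  | nil => exact hu rfl
  | cons h _ => exact (deleteIncidenceSet_adj.1 h).2.1 rfl

end Spanning

section Cut

variable {V : Type*} [Fintype V] {G : SimpleGraph V} {d : ℕ}

/-- Summing over all vertices, the numbers of neighbours in `A` add up to `d` times the size of
`A`. -/
theorem dvd_card_adj_of_forall_ne (hreg : G.IsRegularOfDegree d) {A : Set V} {s : V}
    (h : ∀ b ≠ s, (∀ a, G.Adj b a → a ∈ A) ∨ ∀ a ∈ A, ¬G.Adj b a) :
    d ∣ #{a | G.Adj s a ∧ a ∈ A} := by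
  have hcount : ∑ b, #{a | G.Adj b a ∧ a ∈ A} = #{a | a ∈ A} * d := by
    have hdouble := sum_card_bipartiteAbove_eq_sum_card_bipartiteBelow G.Adj
      (s := univ) (t := univ.filter fun a => a ∈ A)
    have hdeg : ∀ a, #(univ.bipartiteBelow G.Adj a) = d := fun a => by
      rw [← hreg.degree_eq a, ← card_neighborFinset_eq_degree]
      congr 1
      ext b
      simp [bipartiteBelow, G.adj_comm]
    simp only [hdeg, sum_const, smul_eq_mul] at hdouble
    rw [← hdouble]
    refine sum_congr rfl fun b _ => congrArg card ?_
    ext a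
    simp [bipartiteAbove, and_comm]
  have hrest : d ∣ ∑ b ∈ univ.erase s, #{a | G.Adj b a ∧ a ∈ A} := by
    refine dvd_sum fun b hb => ?_
    rcases h b (ne_of_mem_erase hb) with hall | hnone
    · rw [← hreg.degree_eq b, ← card_neighborFinset_eq_degree, neighborFinset_eq_filter]
      exact (congrArg card (filter_congr fun a _ => by simpa using hall a)).dvd
    · rw [filter_false_of_mem fun a _ ha => hnone a ha.2 ha.1]
      exact dvd_zero d
  rw [← add_sum_erase univ _ (mem_univ s)] at hcount
  exact (Nat.dvd_add_left hrest).1 (hcount ▸ dvd_mul_left d _)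

theorem forall_not_adj_of_forall_ne (hreg : G.IsRegularOfDegree d) {A : Set V} {s y : V}
    (h : ∀ b ≠ s, (∀ a, G.Adj b a → a ∈ A) ∨ ∀ a ∈ A, ¬G.Adj b a) (hsy : G.Adj s y)
    (hy : y ∉ A) : ∀ a ∈ A, ¬G.Adj s a := by
  intro a ha hsa
  have hlt : #{a | G.Adj s a ∧ a ∈ A} < d := by
    rw [← hreg.degree_eq s, ← card_neighborFinset_eq_degree, neighborFinset_eq_filter]
    refine card_lt_card (Finset.ssubset_iff_subset_ne.2 ⟨?_, fun heq => ?_⟩)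
    · exact monotone_filter_right _ fun _ _ => And.left
    · exact hy (mem_filter.1 (heq ▸ mem_filter.2 ⟨mem_univ y, hsy⟩)).2.2
  have hzero := Nat.eq_zero_of_dvd_of_lt (dvd_card_adj_of_forall_ne hreg h) hlt
  exact filter_eq_empty_iff.1 (card_eq_zero.1 hzero) (mem_univ a) ⟨hsa, ha⟩

end Cut

section Farthest

variable {V : Type*} [Fintype V] {G : SimpleGraph V} {I : Set V} {d : ℕ} {r z : V}

theorem forall_not_adj_of_crossing (hreg : G.IsRegularOfDegree d) (hI : G.IsIndepSet I)
    {K : Set V} {s y : V} (hK : ∀ b ∈ K, b ∉ I → b ≠ s → ∀ a, G.Adj b a → a ∈ I)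
    (hcross : ∀ a ∈ I, ∀ b ∉ I, b ≠ s → G.Adj a b → (a ∈ K ↔ b ∈ K))
    (hsy : G.Adj s y) (hy : y ∉ K) : ∀ a ∈ I, a ∈ K → ¬G.Adj s a := by
  refine fun a haI haK => forall_not_adj_of_forall_ne (A := I ∩ K) hreg (fun b hbs => ?_) hsy
    (fun h => hy h.2) a ⟨haI, haK⟩
  by_cases hbI : b ∈ I
  · exact Or.inr fun a ha hba => hI hbI ha.1 hba.ne hba
  by_cases hbK : b ∈ K
  · refine Or.inl fun a hba => ?_
    have ha := hK b hbK hbI hbs a hba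
    exact ⟨ha, (hcross a ha b hbI hbs hba.symm).2 hbK⟩
  · exact Or.inr fun a ha hba => hbK ((hcross a ha.1 b hbI hbs hba.symm).1 ha.2)

/-- The vertices that are cut off are farther from `r` than `z`, so those outside `I` have all their
neighbours in `I`; by regularity `z` then has no neighbour among the others. -/
theorem punctured_reachable_of_farthest (hreg : G.IsRegularOfDegree d) (hI : G.IsIndepSet I)
    (hH : (G.between I Iᶜ).Connected) (hr : r ∈ I) (hz : z ∉ I)
    (hfar : ∀ b ∉ I, ∀ a ∉ I, G.Adj b a → (G.between I Iᶜ).dist r b ≤ (G.between I Iᶜ).dist r z) :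
    ∀ v ≠ z, (punctured G I z).Reachable r v := by
  by_contra! ⟨v, hvz, hv⟩
  set K : Set V := {v | v ≠ z ∧ ¬(punctured G I z).Reachable r v}
  have hrK : r ∉ K := fun h => h.2 (Reachable.refl r)
  have hexit : ∀ a ∈ K, ∀ b ∉ K, (G.between I Iᶜ).Adj a b → b = z := by
    intro a ha b hb hab
    by_contra hbz
    have hreach : (punctured G I z).Reachable r b := not_not.1 fun h => hb ⟨hbz, h⟩
    have hba := between_compl_adj.1 hab.symm
    exact ha.2 (hreach.trans (punctured_adj.2 ⟨hba.1, hba.2, hbz, ha.1⟩).reachable)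
  have hdist := lt_dist_of_forall_exit (m := (G.between I Iᶜ).dist r z) hH hrK
    fun a ha b hb hab => by rw [hexit a ha b hb hab]
  obtain ⟨y, -, hzy, hy⟩ := exists_mem_adj_of_notMem hH hr hz
  have hyK : y ∉ K := fun h => by
    have := hdist y h
    omega
  have hnot := forall_not_adj_of_crossing hreg hI (K := K) (s := z)
    (fun b hb hbI _ a hba => by
      by_contra ha
      exact (hdist b hb).not_ge (hfar b hbI a ha hba))
    (fun a ha b hb hbz hab => by
      have hH' := between_compl_adj.2 ⟨hab, iff_of_true ha hb⟩
      refine ⟨fun haK => not_not.1 fun hbK => hbz (hexit a haK b hbK hH'), fun hbK => ?_⟩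
      exact not_not.1 fun haK => hz (hexit b hbK a haK hH'.symm ▸ ha))
    hzy hyK
  refine lt_irrefl _ (lt_dist_of_forall_exit (m := (G.between I Iᶜ).dist r v) hH hrK
    (fun a ha b hb hab => ?_) v ⟨hvz, hv⟩)
  obtain rfl := hexit a ha b hb hab
  have hab' := between_compl_adj.1 hab
  exact (hnot a (hab'.2.2 hz) ha hab'.1.symm).elim

end Farthest

/-! ### An odd number of vertices outside the independent set -/

section OddCases

variable {V : Type*} [Fintype V] {G : SimpleGraph V} {I : Set V} {r z : V}

theorem hasSumDistinguishingWeighting_of_isIndepSet_compl (hI : G.IsIndepSet I)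
    (hIc : G.IsIndepSet Iᶜ) (hodd : Odd #{v | v ∉ I}) (hz : z ∉ I)
    (hr : ∀ v ≠ z, (punctured G I z).Reachable r v) (hdeg : 2 ≤ G.degree z) :
    HasSumDistinguishingWeighting G := by
  obtain ⟨S, hSz, hcard⟩ := exists_subset_card_eq hdeg
  have hS : ∀ v ∈ S, G.Adj z v := fun v hv => (G.mem_neighborFinset z v).1 (hSz hv)
  have hSI : ∀ v ∈ S, v ∈ I := fun v hv => by
    by_contra h
    exact hIc hz h (hS v hv).ne (hS v hv)
  have hSeven : Even #S := hcard ▸ even_two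
  obtain ⟨w, hw⟩ := exists_punctured_join hr hodd hz (fun h => hz (hSI z h)) hSeven
  obtain ⟨δ₀, hδ₀⟩ := exists_isMaxCut (G.between (insert z I)ᶜ (insert z I)ᶜ)
  set δ : V → ℤˣ := fun v => if v ∈ I then -1 else 1
  have hδ : IsMaxCut (G.between (insert z I)ᶜ (insert z I)ᶜ) δ := by
    refine hδ₀.congr fun u v huv => ?_
    obtain ⟨huv, hu, hv⟩ := between_adj.1 huv |>.imp_right (or_self_iff.1 ·)
    exact (hIc (fun h => hu (Or.inr h)) (fun h => hv (Or.inr h)) huv.ne huv).elim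
  refine hasSumDistinguishingWeighting_of_punctured hI hδ hS hSeven hw fun x hx _ => ?_
  have hnonneg : 0 ≤ ∑ y, signedWeight I δ w x y := sum_nonneg fun y _ => by
    rw [signedWeight, if_pos hx]
    split_ifs with h0
    · rfl
    · have hy := (punctured_adj.1 (hw.adj h0)).2.1.1 hx
      rw [show δ y = 1 from if_neg hy, Units.val_one]
      exact zero_le_one
  have hcenter : ∑ v ∈ S, (δ v : ℤ) = -2 := by
    rw [sum_congr rfl fun v hv => congrArg Units.val (if_pos (hSI v hv)), sum_const, hcard]
    rfl
  have hδx : δ x = -1 := if_pos hx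
  rw [hcenter, hδx]
  split_ifs
  · rw [Units.val_neg, Units.val_one]
    omega
  · omega

theorem hasSumDistinguishingWeighting_of_two_le_card (hI : G.IsIndepSet I)
    (hodd : Odd #{v | v ∉ I}) (hz : z ∉ I) (hr : ∀ v ≠ z, (punctured G I z).Reachable r v)
    {a : V} (ha : a ∉ I) (hza : G.Adj z a) (hcard : 2 ≤ #{x | G.Adj z x ∧ x ∈ I}) :
    HasSumDistinguishingWeighting G := by
  set Q : Finset V := {x | G.Adj z x ∧ x ∈ I}
  have hQ {x : V} : x ∈ Q ↔ G.Adj z x ∧ x ∈ I := mem_filter_univ x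
  have haQ : a ∉ Q := fun h => ha (hQ.1 h).2
  have hS : ∀ v ∈ evenPad a Q, G.Adj z v := fun v hv =>
    (mem_insert.1 (evenPad_subset_insert a Q hv)).elim (fun h => h ▸ hza) fun h => (hQ.1 h).1
  have hSeven := even_card_evenPad haQ
  obtain ⟨w, hw⟩ := exists_punctured_join hr hodd hz (fun h => (hS z h).ne rfl) hSeven
  obtain ⟨δ, hδ⟩ := exists_isMaxCut (G.between (insert z I)ᶜ (insert z I)ᶜ)
  obtain ⟨ε, hε⟩ := exists_sum_ne_add Q (fun x => ∑ y, signedWeight I δ w x y -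
    if a ∈ evenPad a Q then (δ a : ℤ) else 0) fun m hm => by
      rw [hm, card_singleton] at hcard
      omega
  set δ' : V → ℤˣ := fun v => if v ∈ I then ε v else δ v
  have hδ' : IsMaxCut (G.between (insert z I)ᶜ (insert z I)ᶜ) δ' := hδ.congr fun u v huv => by
    rw [between_adj] at huv
    grind
  have hweight : signedWeight I δ w = signedWeight I δ' w :=
    signedWeight_congr (hw.toIsEdgeWeight.mono (deleteIncidenceSet_le _ z))
      fun v hv => (if_neg hv).symm
  refine hasSumDistinguishingWeighting_of_punctured hI hδ' hS hSeven hw fun x hx hzx heq => ?_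
  have hxQ : x ∈ Q := hQ.2 ⟨hzx, hx⟩
  have hsum : ∑ v ∈ Q, (δ' v : ℤ) = ∑ v ∈ Q, (ε v : ℤ) :=
    sum_congr rfl fun v hv => congrArg Units.val (if_pos (hQ.1 hv).2)
  have hδx : δ' x = ε x := if_pos hx
  have hδa : δ' a = δ a := if_neg ha
  rw [if_pos (subset_evenPad a Q hxQ), sum_evenPad haQ, hsum, hδx, hδa, ← hweight] at heq
  exact hε x hxQ (by linarith)

end OddCases

section Signs

variable {α : Type*} {s t M M' : Finset α} {δ : α → ℤˣ} {σ : ℤˣ}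

theorem mul_sum_intUnits_add_card (M : Finset α) (δ : α → ℤˣ) (σ : ℤˣ) :
    (σ : ℤ) * ∑ v ∈ M, (δ v : ℤ) + #{v ∈ M | δ v ≠ σ} = #{v ∈ M | δ v = σ} := by
  rw [← sum_filter_add_sum_filter_not M (δ · = σ),
    sum_congr rfl fun v hv => congrArg Units.val (mem_filter.1 hv).2,
    sum_congr (s₁ := M.filter (¬δ · = σ)) rfl fun v hv =>
      congrArg Units.val (Int.units_ne_iff_eq_neg.1 (mem_filter.1 hv).2)]
  simp only [sum_const, nsmul_eq_mul, Units.val_neg, mul_add, mul_neg]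
  linear_combination ((#{v ∈ M | δ v = σ} : ℤ) - #{v ∈ M | δ v ≠ σ}) * Int.units_coe_mul_self σ

theorem mul_sum_le_card_filter (hM : M ⊆ t) :
    (σ : ℤ) * ∑ v ∈ M, (δ v : ℤ) ≤ #{v ∈ t | δ v = σ} := by
  have hle := card_le_card (filter_subset_filter (δ · = σ) hM)
  have hcount := mul_sum_intUnits_add_card M δ σ
  omega

theorem eq_filter_of_mul_sum_eq (hM : M ⊆ t)
    (hsum : (σ : ℤ) * ∑ v ∈ M, (δ v : ℤ) = #{v ∈ t | δ v = σ}) : M = {v ∈ t | δ v = σ} := by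
  have hle := card_le_card (filter_subset_filter (δ · = σ) hM)
  have hcount := mul_sum_intUnits_add_card M δ σ
  have hempty : #{v ∈ M | δ v ≠ σ} = 0 := by omega
  rw [← eq_of_subset_of_card_le (filter_subset_filter (δ · = σ) hM) (by omega),
    filter_true_of_mem fun v hv => not_not.1 (filter_eq_empty_iff.1 (card_eq_zero.1 hempty) hv)]

/-- Among the subsets of `t`, the largest sum of `σ * δ` is attained only by the sign class of
`σ`; since the two sign classes of `s` and of `t` have the same total size, both maxima are. -/
theorem eq_filter_of_sum_eq (hst : #s = #t) (hM : M ⊆ t) (hM' : M' ⊆ t)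
    (hsum : ∑ v ∈ M, (δ v : ℤ) = ∑ v ∈ s with δ v = σ, (δ v : ℤ))
    (hsum' : ∑ v ∈ M', (δ v : ℤ) = ∑ v ∈ s with δ v = -σ, (δ v : ℤ)) :
    M = {v ∈ t | δ v = σ} := by
  have hclass (τ : ℤˣ) : (τ : ℤ) * ∑ v ∈ s with δ v = τ, (δ v : ℤ) = #{v ∈ s | δ v = τ} := by
    rw [sum_congr rfl fun v hv => congrArg Units.val (mem_filter.1 hv).2, sum_const, nsmul_eq_mul,
      mul_left_comm, Int.units_coe_mul_self, mul_one]
  have hcard (u : Finset α) : #{v ∈ u | δ v = σ} + #{v ∈ u | δ v = -σ} = #u := by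
    simp only [← Int.units_ne_iff_eq_neg]
    exact card_filter_add_card_filter_not _
  have hle := mul_sum_le_card_filter (δ := δ) (σ := σ) hM
  have hle' := mul_sum_le_card_filter (δ := δ) (σ := -σ) hM'
  rw [hsum, hclass] at hle
  rw [hsum', hclass] at hle'
  have hs := hcard s
  have ht := hcard t
  refine eq_filter_of_mul_sum_eq hM ?_
  rw [hsum, hclass]
  omega

end Signs

section Joins

variable {V : Type*} [Fintype V] {H : SimpleGraph V} {w : V → V → ZMod 2} {x : V}

theorem exists_join_zero_of_reachable {y₁ y₂ : V} (h₁ : H.Adj x y₁) (h₂ : H.Adj x y₂)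
    (hne : y₁ ≠ y₂) (hr : (H.deleteIncidenceSet x).Reachable y₁ y₂) :
    ∃ c, IsJoin H 0 c ∧ c x y₁ = 1 := by
  obtain ⟨p⟩ := hr
  obtain ⟨q, hq⟩ := exists_join_of_walk p
  have hqx : q x y₁ = 0 := hq.eq_zero fun h => (deleteIncidenceSet_adj.1 h).2.1 rfl
  have hparity : Pi.single y₁ 1 + Pi.single y₂ 1 + (Pi.single x 1 + Pi.single y₁ 1) +
      (Pi.single x 1 + Pi.single y₂ 1) = (0 : V → ZMod 2) := by
    have htwo (a : V → ZMod 2) : a + a = 0 := ZModModule.add_self a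
    linear_combination htwo (Pi.single y₁ 1) + htwo (Pi.single y₂ 1) +
      htwo (Pi.single x 1)
  refine ⟨q + edgeWeight x y₁ + edgeWeight x y₂, hparity ▸
    ((hq.mono (deleteIncidenceSet_le H x)).add (isJoin_edgeWeight h₁)).add
      (isJoin_edgeWeight h₂), ?_⟩
  simp [edgeWeight, hqx, hne, h₁.ne']

theorem IsEdgeWeight.sum_eq_of_forall_adj (hw : IsEdgeWeight H w) {u : V}
    (hu : ∀ y, H.Adj u y → y = x) : ∑ y, w u y = w x u := by
  rw [hw.symm x u]
  exact sum_eq_single x (fun y _ hy => hw.eq_zero fun h => hy (hu y h))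
    fun h => (h (mem_univ x)).elim

end Joins

section Balanced

variable {V : Type*} [Fintype V] {G : SimpleGraph V} {I : Set V} {r x z : V} {d : ℕ}
  {A : Finset V} {w w' : V → V → ZMod 2} {δ : V → ℤˣ}

/-- Every choice of a maximum cut `δ`, of a set `A` of neighbours of `z` and of a corresponding
join makes the punctured construction give the neighbours `x` and `z` equal sums. -/
def IsBalanced (G : SimpleGraph V) (I : Set V) (z x : V) : Prop :=
  ∀ δ, IsMaxCut (G.between (insert z I)ᶜ (insert z I)ᶜ) δ → ∀ A ⊆ (G.neighborFinset z).erase x,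
    ∀ w, IsJoin (punctured G I z) (puncturedParity I z (evenPad x A)) w →
      ∑ y, signedWeight I δ w x y = ∑ v ∈ A, (δ v : ℤ)

theorem adj_of_mem_evenPad (hzx : G.Adj z x) (hA : A ⊆ (G.neighborFinset z).erase x) :
    ∀ v ∈ evenPad x A, G.Adj z v := by
  intro v hv
  rcases mem_insert.1 (evenPad_subset_insert x A hv) with rfl | hvA
  · exact hzx
  · exact (G.mem_neighborFinset z v).1 (mem_of_mem_erase (hA hvA))

theorem exists_evenPad_join (hodd : Odd #{v | v ∉ I}) (hz : z ∉ I)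
    (hr : ∀ v ≠ z, (punctured G I z).Reachable r v) (hzx : G.Adj z x)
    (hA : A ⊆ (G.neighborFinset z).erase x) :
    ∃ w, IsJoin (punctured G I z) (puncturedParity I z (evenPad x A)) w :=
  exists_punctured_join hr hodd hz (fun h => (adj_of_mem_evenPad hzx hA z h).ne rfl)
    (even_card_evenPad fun h => notMem_erase x _ (hA h))

theorem hasSumDistinguishingWeighting_of_not_isBalanced (hI : G.IsIndepSet I) (hzx : G.Adj z x)
    (hx : ∀ y ∈ I, G.Adj z y → y = x) (h : ¬IsBalanced G I z x) :
    HasSumDistinguishingWeighting G := by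
  simp only [IsBalanced, not_forall] at h
  obtain ⟨δ, hδ, A, hA, w, hw, hne⟩ := h
  have hxA : x ∉ A := fun h => notMem_erase x _ (hA h)
  refine hasSumDistinguishingWeighting_of_punctured hI hδ (adj_of_mem_evenPad hzx hA)
    (even_card_evenPad hxA) hw fun y hy hzy heq => ?_
  obtain rfl := hx y hy hzy
  rw [sum_evenPad hxA] at heq
  exact hne (add_right_cancel heq)

theorem sum_signedWeight_eq_sum_filter (hxI : x ∈ I) (hw : IsEdgeWeight (punctured G I z) w) :
    ∑ y, signedWeight I δ w x y =
      ∑ y ∈ (G.neighborFinset x).erase z with w x y ≠ 0, (δ y : ℤ) := by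
  rw [sum_filter]
  refine (sum_subset (subset_univ _) fun y _ hy => ?_).symm.trans (sum_congr rfl fun y _ => ?_)
  · refine if_pos (hw.eq_zero fun h => hy ?_)
    have hxy := punctured_adj.1 h
    exact mem_erase.2 ⟨hxy.2.2.2, (G.mem_neighborFinset x y).2 hxy.1⟩
  · rw [signedWeight, if_pos hxI, ite_not]

theorem IsBalanced.filter_ne_zero_eq (hbal : IsBalanced G I z x) (hxI : x ∈ I)
    (hcard : G.degree x = G.degree z) (hzx : G.Adj z x)
    (hjoin : ∀ A ⊆ (G.neighborFinset z).erase x,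
      ∃ w, IsJoin (punctured G I z) (puncturedParity I z (evenPad x A)) w)
    (hδ : IsMaxCut (G.between (insert z I)ᶜ (insert z I)ᶜ) δ) {σ : ℤˣ}
    (hw : IsJoin (punctured G I z) (puncturedParity I z
      (evenPad x {v ∈ (G.neighborFinset z).erase x | δ v = σ})) w) :
    {y ∈ (G.neighborFinset x).erase z | w x y ≠ 0} =
      {y ∈ (G.neighborFinset x).erase z | δ y = σ} := by
  obtain ⟨w', hw'⟩ := hjoin _ (filter_subset (δ · = -σ) _)
  refine eq_filter_of_sum_eq (s := (G.neighborFinset z).erase x)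
    (M' := {y ∈ (G.neighborFinset x).erase z | w' x y ≠ 0}) ?_ (filter_subset _ _)
    (filter_subset _ _) ?_ ?_
  · rw [card_erase_of_mem ((G.mem_neighborFinset z x).2 hzx),
      card_erase_of_mem ((G.mem_neighborFinset x z).2 hzx.symm), card_neighborFinset_eq_degree,
      card_neighborFinset_eq_degree, hcard]
  · rw [← sum_signedWeight_eq_sum_filter hxI hw.toIsEdgeWeight]
    exact hbal δ hδ _ (filter_subset _ _) w hw
  · rw [← sum_signedWeight_eq_sum_filter hxI hw'.toIsEdgeWeight]
    exact hbal δ hδ _ (filter_subset _ _) w' hw'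

theorem mem_erase_neighborFinset_iff (hI : G.IsIndepSet I) (hxI : x ∈ I) (hzI : z ∉ I) {y : V} :
    y ∈ (G.neighborFinset x).erase z ↔ (punctured G I z).Adj x y := by
  rw [mem_erase, mem_neighborFinset, punctured_adj]
  constructor
  · rintro ⟨hyz, hxy⟩
    exact ⟨hxy, iff_of_true hxI fun hy => hI hxI hy hxy.ne hxy, ne_of_mem_of_not_mem hxI hzI, hyz⟩
  · exact fun h => ⟨h.2.2.2, h.1⟩

/-- Otherwise a cycle through `x` changes the value of a join on the edge from `x` to `y₁`. -/
theorem IsBalanced.not_reachable (hbal : IsBalanced G I z x) (hI : G.IsIndepSet I) (hxI : x ∈ I)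
    (hzI : z ∉ I) (hcard : G.degree x = G.degree z) (hzx : G.Adj z x)
    (hjoin : ∀ A ⊆ (G.neighborFinset z).erase x,
      ∃ w, IsJoin (punctured G I z) (puncturedParity I z (evenPad x A)) w) {y₁ y₂ : V}
    (h₁ : (punctured G I z).Adj x y₁) (h₂ : (punctured G I z).Adj x y₂) (hne : y₁ ≠ y₂) :
    ¬((punctured G I z).deleteIncidenceSet x).Reachable y₁ y₂ := by
  intro hr
  obtain ⟨δ, hδ⟩ := exists_isMaxCut (G.between (insert z I)ᶜ (insert z I)ᶜ)
  obtain ⟨w, hw⟩ := hjoin _ (filter_subset (δ · = 1) _)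
  obtain ⟨c, hc, hcy⟩ := exists_join_zero_of_reachable h₁ h₂ hne hr
  have hwc := hw.add hc
  rw [add_zero] at hwc
  have hiff := congrArg (y₁ ∈ ·) ((hbal.filter_ne_zero_eq hxI hcard hzx hjoin hδ hw).trans
    (hbal.filter_ne_zero_eq hxI hcard hzx hjoin hδ hwc).symm)
  simp only [mem_filter, (mem_erase_neighborFinset_iff hI hxI hzI).2 h₁, true_and, Pi.add_apply,
    hcy] at hiff
  revert hiff
  generalize w x y₁ = a
  revert a
  decide

/-- At a vertex `u` whose only neighbour is `x`, the parities determine the value of the join on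
the edge from `x` to `u`. -/
theorem IsBalanced.exists_adj_ne (hbal : IsBalanced G I z x) (hI : G.IsIndepSet I) (hxI : x ∈ I)
    (hzI : z ∉ I) (hcard : G.degree x = G.degree z) (hzx : G.Adj z x)
    (hjoin : ∀ A ⊆ (G.neighborFinset z).erase x,
      ∃ w, IsJoin (punctured G I z) (puncturedParity I z (evenPad x A)) w) {u : V}
    (hxu : (punctured G I z).Adj x u) : ∃ y, (punctured G I z).Adj u y ∧ y ≠ x := by
  by_contra! hu
  obtain ⟨δ, hδ⟩ := exists_isMaxCut (G.between (insert z I)ᶜ (insert z I)ᶜ)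
  have hmem (σ : ℤˣ) : u ∉ ({v ∈ (G.neighborFinset z).erase x | δ v = σ} : Finset V) ↔ δ u = σ := by
    obtain ⟨w, hw⟩ := hjoin _ (filter_subset (δ · = σ) _)
    have hiff := congrArg (u ∈ ·) (hbal.filter_ne_zero_eq hxI hcard hzx hjoin hδ hw)
    simp only [mem_filter, (mem_erase_neighborFinset_iff hI hxI hzI).2 hxu, true_and] at hiff
    have hxu' := punctured_adj.1 hxu
    have huI : u ∉ insert z I := not_or.2 ⟨hxu'.2.2.2, hxu'.2.1.1 hxI⟩
    have hsum := hw.sum_eq u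
    rw [hw.toIsEdgeWeight.sum_eq_of_forall_adj hu, puncturedParity, if_neg huI] at hsum
    simp only [mem_evenPad_of_ne hxu.ne'] at hsum
    rw [← eq_iff_iff.1 hiff, hsum]
    split_ifs with h
    · exact iff_of_false (not_not.2 h) (by decide)
    · exact iff_of_true h (by decide)
  have huz : u ∉ (G.neighborFinset z).erase x := fun h =>
    (hmem (δ u)).2 rfl (mem_filter.2 ⟨h, rfl⟩)
  exact units_ne_neg_self (δ u) ((hmem (-δ u)).1 fun h => huz (mem_filter.1 h).1)

end Balanced

section Unbalanced

variable {V : Type*} [Fintype V] {G : SimpleGraph V} {I : Set V} {r u x z : V} {d : ℕ}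

theorem eq_or_eq_of_adj_of_degree_eq_two {a b c : V} (hdeg : G.degree u = 2) (ha : G.Adj u a)
    (hb : G.Adj u b) (hab : a ≠ b) (hc : G.Adj u c) : c = a ∨ c = b := by
  have hsub : {a, b} ⊆ G.neighborFinset u := by
    rintro y hy
    rcases mem_insert.1 hy with rfl | hy
    · exact (G.mem_neighborFinset u y).2 ha
    · exact (G.mem_neighborFinset u y).2 (mem_singleton.1 hy ▸ hb)
  have heq := eq_of_subset_of_card_le hsub (by
    rw [card_neighborFinset_eq_degree, hdeg, card_pair hab])
  simpa only [mem_insert, mem_singleton] using heq.ge ((G.mem_neighborFinset u c).2 hc)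

theorem exists_neighborFinset_erase_eq_singleton {a : V} (hdeg : G.degree u = 2)
    (ha : G.Adj u a) : ∃ b, (G.neighborFinset u).erase a = {b} :=
  card_eq_one.1 (by
    rw [card_erase_of_mem ((G.mem_neighborFinset u a).2 ha), card_neighborFinset_eq_degree, hdeg])

theorem IsBalanced.apply_eq (hbal : IsBalanced G I z x) (hxI : x ∈ I) {b : V} {δ : V → ℤˣ}
    (hjoin : ∀ A ⊆ (G.neighborFinset z).erase x,
      ∃ w, IsJoin (punctured G I z) (puncturedParity I z (evenPad x A)) w)
    (hu : (G.neighborFinset x).erase z = {u}) (hb : (G.neighborFinset z).erase x = {b})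
    (hδ : IsMaxCut (G.between (insert z I)ᶜ (insert z I)ᶜ) δ) : δ u = δ b := by
  obtain ⟨w, hw⟩ := hjoin _ (subset_refl _)
  have hsum := hbal δ hδ _ (subset_refl _) w hw
  rw [sum_signedWeight_eq_sum_filter hxI hw.toIsEdgeWeight, hu, hb, sum_singleton,
    sum_filter, sum_singleton] at hsum
  split_ifs at hsum
  · exact Units.ext hsum
  · exact absurd hsum.symm (δ b).ne_zero

/-- Flipping `δ` at the neighbour of `z` other than `x`, which lies in no edge cut by `δ`,
destroys the balance. -/
theorem not_isBalanced_of_isRegularOfDegree_two (hreg : G.IsRegularOfDegree 2)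
    (hI : G.IsIndepSet I) (hH : (G.between I Iᶜ).Connected) (hr : r ∈ I) (hzI : z ∉ I)
    (hxI : x ∈ I) (hzx : G.Adj z x) (hx : ∀ y ∈ I, G.Adj z y → y = x)
    (hjoin : ∀ A ⊆ (G.neighborFinset z).erase x,
      ∃ w, IsJoin (punctured G I z) (puncturedParity I z (evenPad x A)) w) :
    ¬IsBalanced G I z x := by
  intro hbal
  have hcard : G.degree x = G.degree z := (hreg x).trans (hreg z).symm
  obtain ⟨u, hu⟩ := exists_neighborFinset_erase_eq_singleton (hreg x) hzx.symm
  obtain ⟨b, hb⟩ := exists_neighborFinset_erase_eq_singleton (hreg z) hzx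
  have hxu : (punctured G I z).Adj x u :=
    (mem_erase_neighborFinset_iff hI hxI hzI).1 (hu ▸ mem_singleton_self u)
  obtain ⟨hbx, hzb⟩ : b ≠ x ∧ G.Adj z b := by
    simpa only [mem_erase, mem_neighborFinset] using hb.ge (mem_singleton_self b)
  have hub : u ≠ b := by
    rintro rfl
    obtain ⟨y, huy, hyx⟩ := hbal.exists_adj_ne hI hxI hzI hcard hzx hjoin hxu
    have huy' := punctured_adj.1 huy
    rcases eq_or_eq_of_adj_of_degree_eq_two (hreg u) (punctured_adj.1 hxu).1.symm hzb.symm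
      hzx.ne' huy'.1 with h | h
    · exact hyx h
    · exact huy'.2.2.2 h
  obtain ⟨c, hcI, hbc, -⟩ := exists_mem_adj_of_notMem hH hr fun h => hbx (hx b h hzb)
  obtain ⟨δ, hδ⟩ := exists_isMaxCut (G.between (insert z I)ᶜ (insert z I)ᶜ)
  have hflip := hbal.apply_eq hxI hjoin hu hb (δ := Function.update δ b (-δ b)) (hδ.congr
    fun a v hav => by
      refine (Function.update_of_ne ?_ _ _).symm
      rintro rfl
      have := between_adj.1 hav
      rcases eq_or_eq_of_adj_of_degree_eq_two (hreg a) hzb.symm hbc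
        (ne_of_mem_of_not_mem hcI hzI).symm this.1 with rfl | rfl <;> grind)
  rw [Function.update_of_ne hub, Function.update_self,
    hbal.apply_eq hxI hjoin hu hb hδ] at hflip
  exact units_ne_neg_self (δ b) hflip

theorem IsBalanced.eq_of_exit (hbal : IsBalanced G I z x) (hI : G.IsIndepSet I) (hxI : x ∈ I)
    (hzI : z ∉ I) (hcard : G.degree x = G.degree z) (hzx : G.Adj z x)
    (hx : ∀ y ∈ I, G.Adj z y → y = x)
    (hjoin : ∀ A ⊆ (G.neighborFinset z).erase x,
      ∃ w, IsJoin (punctured G I z) (puncturedParity I z (evenPad x A)) w)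
    (hxu : (punctured G I z).Adj x u) {a b : V}
    (ha : ((punctured G I z).deleteIncidenceSet x).Reachable u a)
    (hb : ¬((punctured G I z).deleteIncidenceSet x).Reachable u b)
    (hab : (G.between I Iᶜ).Adj a b) : a = u ∧ b = x := by
  obtain ⟨hab, hside⟩ := between_compl_adj.1 hab
  have hax : a ≠ x := ne_of_reachable_deleteIncidenceSet hxu.ne' ha
  have haz : a ≠ z := ne_of_reachable_deleteIncidenceSet (punctured_adj.1 hxu).2.2.2
    (ha.mono (deleteIncidenceSet_le _ _))
  have hbz : b ≠ z := by
    rintro rfl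
    exact hax (hx a (hside.2 hzI) hab.symm)
  have hpab : (punctured G I z).Adj a b := punctured_adj.2 ⟨hab, hside, haz, hbz⟩
  obtain rfl : b = x := by
    by_contra hbx
    exact hb (ha.trans (deleteIncidenceSet_adj.2 ⟨hpab, hax, hbx⟩).reachable)
  refine ⟨by_contra fun hau => ?_, rfl⟩
  exact hbal.not_reachable hI hxI hzI hcard hzx hjoin hxu hpab.symm (Ne.symm hau) ha

/-- Otherwise every vertex of the component of `u` other than `u` is farther from `r` than `z`,
so the component is bipartite and `x` is the only neighbour of `u` in the punctured graph. -/
theorem IsBalanced.reachable_of_adj (hbal : IsBalanced G I z x) (hreg : G.IsRegularOfDegree d)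
    (hI : G.IsIndepSet I) (hH : (G.between I Iᶜ).Connected) (hr : r ∈ I) (hzI : z ∉ I)
    (hfar : ∀ b ∉ I, ∀ a ∉ I, G.Adj b a → (G.between I Iᶜ).dist r b ≤ (G.between I Iᶜ).dist r z)
    (hxI : x ∈ I) (hzx : G.Adj z x) (hx : ∀ y ∈ I, G.Adj z y → y = x)
    (hjoin : ∀ A ⊆ (G.neighborFinset z).erase x,
      ∃ w, IsJoin (punctured G I z) (puncturedParity I z (evenPad x A)) w)
    (hxu : (punctured G I z).Adj x u) :
    ((punctured G I z).deleteIncidenceSet x).Reachable u r := by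
  by_contra hrK
  have hcard : G.degree x = G.degree z := (hreg x).trans (hreg z).symm
  set K : Set V := {v | ((punctured G I z).deleteIncidenceSet x).Reachable u v}
  have huK : u ∈ K := Reachable.refl u
  have huI : u ∉ I := (punctured_adj.1 hxu).2.1.1 hxI
  have hexit : ∀ a ∈ K, ∀ b ∉ K, (G.between I Iᶜ).Adj a b → a = u ∧ b = x := fun a ha b hb =>
    hbal.eq_of_exit hI hxI hzI hcard hzx hx hjoin hxu ha hb
  have hdist_u : (G.between I Iᶜ).dist r z ≤ (G.between I Iᶜ).dist r u := by
    obtain ⟨y, hyI, hzy, hy⟩ := exists_mem_adj_of_notMem hH hr hzI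
    rw [← hy, hx y hyI hzy]
    exact lt_dist_of_forall_exit hH hrK (fun a ha b hb hab => by rw [(hexit a ha b hb hab).2]) u huK
  have hdist : ∀ v ∈ K \ {u}, (G.between I Iᶜ).dist r z < (G.between I Iᶜ).dist r v := by
    refine lt_dist_of_forall_exit hH (fun h => hrK h.1) fun a ha b hb hab => ?_
    by_cases hbK : b ∈ K
    · rwa [show b = u from by_contra fun h => hb ⟨hbK, h⟩]
    · exact (ha.2 (hexit a ha.1 b hbK hab).1).elim
  have hnot := forall_not_adj_of_crossing hreg hI (K := K) (s := u)
    (fun b hb hbI hbu a hba => by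
      by_contra ha
      exact (hdist b ⟨hb, hbu⟩).not_ge (hfar b hbI a ha hba))
    (fun a ha b hb hbu hab => by
      have hab' := between_compl_adj.2 ⟨hab, iff_of_true ha hb⟩
      exact ⟨fun haK => by_contra fun hbK => huI ((hexit a haK b hbK hab').1 ▸ ha),
        fun hbK => by_contra fun haK => hbu (hexit b hbK a haK hab'.symm).1⟩)
    (punctured_adj.1 hxu).1.symm fun h => ne_of_reachable_deleteIncidenceSet hxu.ne' h rfl
  obtain ⟨y, huy, hyx⟩ := hbal.exists_adj_ne hI hxI hzI hcard hzx hjoin hxu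
  have huy' := punctured_adj.1 huy
  exact hnot y (by_contra fun hy => huI (huy'.2.1.2 hy))
    (deleteIncidenceSet_adj.2 ⟨huy, hxu.ne', hyx⟩).reachable huy'.1

theorem not_isBalanced (hreg : G.IsRegularOfDegree d) (hd : 2 ≤ d) (hI : G.IsIndepSet I)
    (hH : (G.between I Iᶜ).Connected) (hr : r ∈ I) (hzI : z ∉ I)
    (hfar : ∀ b ∉ I, ∀ a ∉ I, G.Adj b a → (G.between I Iᶜ).dist r b ≤ (G.between I Iᶜ).dist r z)
    (hxI : x ∈ I) (hzx : G.Adj z x) (hx : ∀ y ∈ I, G.Adj z y → y = x)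
    (hjoin : ∀ A ⊆ (G.neighborFinset z).erase x,
      ∃ w, IsJoin (punctured G I z) (puncturedParity I z (evenPad x A)) w) :
    ¬IsBalanced G I z x := by
  obtain rfl | hd := hd.eq_or_lt
  · exact not_isBalanced_of_isRegularOfDegree_two hreg hI hH hr hzI hxI hzx hx hjoin
  intro hbal
  obtain ⟨u₁, hu₁, u₂, hu₂, hne⟩ := one_lt_card.1 (show 1 < #((G.neighborFinset x).erase z) by
    rw [card_erase_of_mem ((G.mem_neighborFinset x z).2 hzx.symm),
      card_neighborFinset_eq_degree, hreg]
    omega)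
  rw [mem_erase_neighborFinset_iff hI hxI hzI] at hu₁ hu₂
  have hreach {u : V} := hbal.reachable_of_adj (u := u) hreg hI hH hr hzI hfar hxI hzx hx hjoin
  exact hbal.not_reachable hI hxI hzI ((hreg x).trans (hreg z).symm) hzx hjoin hu₁ hu₂ hne
    ((hreach hu₁).trans (hreach hu₂).symm)

end Unbalanced

/-! ### Regular graphs -/

section Regular

variable {V : Type*} [Fintype V] {G : SimpleGraph V} {I : Set V} {r : V} {d : ℕ}

theorem hasSumDistinguishingWeighting_of_farthest (hreg : G.IsRegularOfDegree d) (hd : 2 ≤ d)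
    (hI : G.IsIndepSet I) (hH : (G.between I Iᶜ).Connected) (hr : r ∈ I)
    (hodd : Odd #{v | v ∉ I}) {z a : V} (hz : z ∉ I) (ha : a ∉ I) (hza : G.Adj z a)
    (hfar : ∀ b ∉ I, ∀ a ∉ I, G.Adj b a →
      (G.between I Iᶜ).dist r b ≤ (G.between I Iᶜ).dist r z) :
    HasSumDistinguishingWeighting G := by
  have hpunct := punctured_reachable_of_farthest hreg hI hH hr hz hfar
  by_cases hcard : 2 ≤ #{x | G.Adj z x ∧ x ∈ I}
  · exact hasSumDistinguishingWeighting_of_two_le_card hI hodd hz hpunct ha hza hcard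
  obtain ⟨x, hxI, hzx, -⟩ := exists_mem_adj_of_notMem hH hr hz
  have hx : ∀ y ∈ I, G.Adj z y → y = x := fun y hyI hzy =>
    card_le_one.1 (Nat.lt_succ_iff.1 (not_le.1 hcard)) y ((mem_filter_univ y).2 ⟨hzy, hyI⟩) x
      ((mem_filter_univ x).2 ⟨hzx, hxI⟩)
  exact hasSumDistinguishingWeighting_of_not_isBalanced hI hzx hx
    (not_isBalanced hreg hd hI hH hr hz hfar hxI hzx hx
      fun A hA => exists_evenPad_join hodd hz hpunct hzx hA)

theorem hasSumDistinguishingWeighting_of_odd (hreg : G.IsRegularOfDegree d) (hd : 2 ≤ d)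
    (hI : G.IsIndepSet I) (hH : (G.between I Iᶜ).Connected) (hr : r ∈ I)
    (hodd : Odd #{v | v ∉ I}) : HasSumDistinguishingWeighting G := by
  by_cases hIc : G.IsIndepSet Iᶜ
  · obtain ⟨z, hz⟩ := card_pos.1 hodd.pos
    have hz : z ∉ I := (mem_filter_univ z).1 hz
    have hpunct := punctured_reachable_of_farthest hreg hI hH hr hz fun b hb a ha hba =>
      (hIc hb ha hba.ne hba).elim
    exact hasSumDistinguishingWeighting_of_isIndepSet_compl hI hIc hodd hz hpunct
      (hd.trans_eq (hreg z).symm)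
  · obtain ⟨b, hb, a, ha, -, hba⟩ : ∃ b ∈ Iᶜ, ∃ a ∈ Iᶜ, b ≠ a ∧ G.Adj b a := by
      simpa only [isIndepSet_iff, Set.Pairwise, not_forall, exists_prop, not_not] using hIc
    obtain ⟨z, ⟨hz, c, hc, hzc⟩, hmax⟩ := Set.exists_max_image {b | b ∉ I ∧ ∃ a ∉ I, G.Adj b a}
      ((G.between I Iᶜ).dist r) (Set.toFinite _) ⟨b, hb, a, ha, hba⟩
    exact hasSumDistinguishingWeighting_of_farthest hreg hd hI hH hr hodd hz hc hzc
      fun b hb a ha hba => hmax b ⟨hb, a, ha, hba⟩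

theorem hasSumDistinguishingWeighting_of_two_le (hconn : G.Connected)
    (hreg : G.IsRegularOfDegree d) (hd : 2 ≤ d) : HasSumDistinguishingWeighting G := by
  obtain ⟨r⟩ := hconn.nonempty
  obtain ⟨I, hr, hI, hH⟩ := exists_isIndepSet_connected_between hconn r
  rcases Nat.even_or_odd #{v | v ∉ I} with heven | hodd
  · exact hasSumDistinguishingWeighting_of_even hI (fun v _ => hH.preconnected r v) heven
  · exact hasSumDistinguishingWeighting_of_odd hreg hd hI hH hr hodd

theorem hasSumDistinguishingWeighting_of_isRegularOfDegree_zero (hreg : G.IsRegularOfDegree 0) :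
    HasSumDistinguishingWeighting G :=
  ⟨0, .zero, fun _ _ => abs_zero.trans_le zero_le_one, fun u v huv =>
    (((G.degree_pos_iff_exists_adj u).2 ⟨v, huv⟩).ne' (hreg u)).elim⟩

theorem nonempty_iso_top_of_isRegularOfDegree_one (hconn : G.Connected)
    (hreg : G.IsRegularOfDegree 1) : Nonempty (G ≃g (⊤ : SimpleGraph (Fin 2))) := by
  have hedge := hconn.card_vert_le_card_edgeSet_add_one
  have hsum := G.sum_degrees_eq_twice_card_edges
  rw [Nat.card_eq_fintype_card, Nat.card_eq_fintype_card, ← edgeFinset_card] at hedge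
  rw [sum_congr rfl fun v _ => hreg v, sum_const, card_univ, smul_eq_mul] at hsum
  obtain ⟨v⟩ := hconn.nonempty
  have hlt := G.degree_lt_card_verts v
  rw [hreg v] at hlt
  have hcard : Fintype.card V = 2 := by omega
  have htop : G = ⊤ := top_unique fun u v huv =>
    (G.degree_eq_card_sub_one u).1 (by rw [hreg u, hcard]) huv
  exact ⟨htop ▸ Iso.completeGraph (Fintype.equivFinOfCardEq hcard)⟩

end Regular

end LocallyIrregular

/-- If `G` is a connected regular simple graph not isomorphic to `K₂`, then
`lir(²G) ≤ 2`. -/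
theorem lir_two_mul_regular {V : Type*} [Fintype V] [DecidableEq V]
    (G : SimpleGraph V) (hconn : G.Connected)
    (hreg : ∃ d : ℕ, G.IsRegularOfDegree d)
    (hK2 : ¬ Nonempty (G ≃g (⊤ : SimpleGraph (Fin 2)))) :
    LIRtwoLE2 G := by
  obtain ⟨d, hreg⟩ := hreg
  suffices h : LocallyIrregular.HasSumDistinguishingWeighting G from h.lirtwoLE2 hreg
  match d, hreg with
  | 0, hreg =>
    exact LocallyIrregular.hasSumDistinguishingWeighting_of_isRegularOfDegree_zero hreg
  | 1, hreg =>
    exact absurd (LocallyIrregular.nonempty_iso_top_of_isRegularOfDegree_one hconn hreg) hK2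
  | d + 2, hreg =>
    exact LocallyIrregular.hasSumDistinguishingWeighting_of_two_le hconn hreg (Nat.le_add_left 2 d)
end

section
/- If G is a connected simple graph that is not isomorphic to K2 (the complete graph on two vertices) and G admits a proper vertex coloring with at most 4 colors (in particular, if G is tripartite or 4-partite), then lir(^2G) ≤ 4. -/
open scoped Classical

/-- The `c`-degree of a vertex `x`: the sum of the multiplicities `w e c`
over all edges `e` of `G` incident with `x`. -/
noncomputable def colorDeg {V : Type*} [Fintype V] [DecidableEq V]
    (G : SimpleGraph V) {k : ℕ} (w : Sym2 V → Fin k → ℕ) (c : Fin k) (x : V) : ℕ :=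
  ∑ e ∈ G.edgeFinset.filter (fun e => x ∈ e), w e c

/-- `w` encodes a locally irregular `k`-edge-coloring of `²G`: each edge of `G`
gets a multiplicity vector summing to `2`, and for every edge `uv` and every
color `c` with `w s(u,v) c ≥ 1`, the `c`-degrees of `u` and `v` differ. -/
def IsLIRk {V : Type*} [Fintype V] [DecidableEq V]
    (G : SimpleGraph V) {k : ℕ} (w : Sym2 V → Fin k → ℕ) : Prop :=
  (∀ e ∈ G.edgeSet, ∑ c, w e c = 2) ∧
  ∀ u v : V, G.Adj u v → ∀ c : Fin k,
    1 ≤ w s(u, v) c → colorDeg G w c u ≠ colorDeg G w c v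

/-- `lir(²G) ≤ k`: there is a locally irregular `k`-edge-coloring of `²G`. -/
def LIRtwoLE {V : Type*} [Fintype V] [DecidableEq V] (G : SimpleGraph V) (k : ℕ) : Prop :=
  ∃ w : Sym2 V → Fin k → ℕ, IsLIRk G w

/-!
It suffices to split the edges of `G` into two bipartite graphs `H` and `K` without isolated edges:
each of these has a locally irregular 2-colouring of its doubled edges, and the two palettes are
kept disjoint.

*Splitting.* Encoding the four colours as pairs of bits splits `G` into bipartite graphs. Choose
such a splitting with an inclusion-minimal set of ends of isolated edges. If `uv` is an isolated
edge of `H` but not of `G`, moving single edges between `H` and `K` shows that `K` has a component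
which is a path `u w v`, and exchanging `uv` with `uw` then shows that `uvw` is a component of `G`.
A triangle has a locally irregular 3-colouring of its doubled edges.

*Bipartite graphs.* Let `H` be connected and bipartite. If one side has even size, it is the set of
odd-degree vertices of some subgraph `J`; giving the edges of `J` multiplicity 1 in both colours and
all other edges multiplicity 2 in colour 1 makes the colour degrees of adjacent vertices differ in
parity. Otherwise do this for one side with a suitable non-cut vertex `r` removed. Doubling edges in
colour 0 does not affect parities, so it remains to choose which edges at `r` to double in colour 0
so that `r` differs from all its neighbours.
-/

open Finset

section Component

variable {V : Type*} {G : SimpleGraph V}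

theorem image_val_neighborSet_toSimpleGraph (C : G.ConnectedComponent)
    (x : C) : Subtype.val '' C.toSimpleGraph.neighborSet x = G.neighborSet x := by
  obtain ⟨x, hx⟩ := x
  ext y
  have hmem (hxy : G.Adj x y) : y ∈ C.supp := C.mem_supp_of_adj_mem_supp hx hxy
  constructor
  · rintro ⟨y, hxy, rfl⟩
    exact hxy
  · exact fun hxy ↦ ⟨⟨y, hmem hxy⟩, hxy, rfl⟩

theorem injective_sym2Map_val_connectedComponent (G : SimpleGraph V) :
    Function.Injective fun p : Σ C : G.ConnectedComponent, Sym2 C ↦ p.2.map Subtype.val := by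
  rintro ⟨C, e⟩ ⟨D, f⟩ (hef : e.map Subtype.val = f.map Subtype.val)
  have hx : e.out.1.1 ∈ f.map Subtype.val :=
    hef ▸ Sym2.mem_map.2 ⟨_, e.out_fst_mem, rfl⟩
  obtain ⟨y, -, hy⟩ := Sym2.mem_map.1 hx
  obtain rfl : C = D := e.out.1.2.symm.trans (hy ▸ y.2)
  rw [Sym2.map.injective Subtype.val_injective hef]

end Component

section Coloring

variable {V : Type*} [Fintype V] [DecidableEq V] {G H K : SimpleGraph V} {k l : ℕ}

theorem colorDeg_eq_sum_neighborFinset (w : Sym2 V → Fin k → ℕ) (c : Fin k) (x : V) :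
    colorDeg G w c x = ∑ y ∈ G.neighborFinset x, w s(x, y) c := by
  have himage : G.edgeFinset.filter (x ∈ ·) = (G.neighborFinset x).image (s(x, ·)) := by
    ext e
    induction e with | h a b =>
    simp only [mem_filter, SimpleGraph.mem_edgeFinset, SimpleGraph.mem_edgeSet, mem_image,
      SimpleGraph.mem_neighborFinset, Sym2.mem_iff]
    grind [SimpleGraph.adj_comm]
  rw [colorDeg, himage, sum_image fun _ _ _ _ h ↦ Sym2.congr_right.1 h]

theorem colorDeg_indicator (hHG : H ≤ G) (w : Sym2 V → Fin k → ℕ) (c : Fin k) (x : V) :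
    colorDeg G (H.edgeSet.indicator w) c x = colorDeg H w c x := by
  have hsub : H.neighborFinset x ⊆ G.neighborFinset x := fun y ↦ by
    simpa using fun h : H.Adj x y ↦ hHG h
  simp only [colorDeg_eq_sum_neighborFinset]
  rw [← sum_subset hsub]
  · exact sum_congr rfl fun y hy ↦ by
      rw [Set.indicator_of_mem (by simpa using hy)]
  · exact fun y _ hy ↦ by rw [Set.indicator_of_notMem (by simpa using hy), Pi.zero_apply]

theorem LIRtwoLE.sup (hdisj : Disjoint H K) (hH : LIRtwoLE H k) (hK : LIRtwoLE K l) :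
    LIRtwoLE (H ⊔ K) (k + l) := by
  obtain ⟨w, hw, hwirr⟩ := hH
  obtain ⟨w', hw', hwirr'⟩ := hK
  have hdisj : Disjoint H.edgeSet K.edgeSet := SimpleGraph.disjoint_edgeSet.2 hdisj
  let W : Sym2 V → Fin (k + l) → ℕ :=
    fun e ↦ Fin.append (H.edgeSet.indicator w e) (K.edgeSet.indicator w' e)
  have hleft (c : Fin k) (x : V) : colorDeg (H ⊔ K) W (c.castAdd l) x = colorDeg H w c x := by
    rw [← colorDeg_indicator (le_sup_left : H ≤ H ⊔ K)]
    simp [colorDeg, W]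
  have hright (c : Fin l) (x : V) : colorDeg (H ⊔ K) W (c.natAdd k) x = colorDeg K w' c x := by
    rw [← colorDeg_indicator (le_sup_right : K ≤ H ⊔ K)]
    simp [colorDeg, W]
  refine ⟨W, fun e he ↦ ?_, fun u v _ c ↦ ?_⟩
  · rw [SimpleGraph.edgeSet_sup] at he
    rw [Fin.sum_univ_add]
    obtain he | he := he
    · simp [W, he, hdisj.notMem_of_mem_left he, hw e he]
    · simp [W, he, hdisj.notMem_of_mem_right he, hw' e he]
  · refine Fin.addCases (fun c hc ↦ ?_) (fun c hc ↦ ?_) c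
    · have huv : H.Adj u v := by
        by_contra h
        simp [W, h] at hc
      rw [hleft, hleft]
      exact hwirr u v huv c (by simpa [W, huv] using hc)
    · have huv : K.Adj u v := by
        by_contra h
        simp [W, h] at hc
      rw [hright, hright]
      exact hwirr' u v huv c (by simpa [W, huv] using hc)

theorem lirTwoLE_bot (k : ℕ) : LIRtwoLE (⊥ : SimpleGraph V) k :=
  ⟨0, by simp [IsLIRk]⟩

theorem LIRtwoLE.mono (hkl : k ≤ l) (hG : LIRtwoLE G k) : LIRtwoLE G l := by
  obtain ⟨m, rfl⟩ := Nat.exists_eq_add_of_le hkl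
  simpa using hG.sup disjoint_bot_right (lirTwoLE_bot m)

theorem colorDeg_toSimpleGraph (C : G.ConnectedComponent) (w : Sym2 V → Fin k → ℕ) (c : Fin k)
    (x : C) : colorDeg C.toSimpleGraph (fun e ↦ w (e.map Subtype.val)) c x = colorDeg G w c x := by
  have hneighbor : G.neighborFinset x =
      (C.toSimpleGraph.neighborFinset x).map (Function.Embedding.subtype _) :=
    coe_injective (by simpa using (image_val_neighborSet_toSimpleGraph C x).symm)
  rw [colorDeg_eq_sum_neighborFinset, colorDeg_eq_sum_neighborFinset, hneighbor, sum_map]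
  rfl

theorem LIRtwoLE.of_components
    (h : ∀ C : G.ConnectedComponent, LIRtwoLE C.toSimpleGraph k) : LIRtwoLE G k := by
  choose w hw hirr using h
  let W : Sym2 V → Fin k → ℕ := Function.extend
    (fun p : Σ C : G.ConnectedComponent, Sym2 C ↦ p.2.map Subtype.val) (fun p ↦ w p.1 p.2) 0
  have hW (C : G.ConnectedComponent) : (fun e : Sym2 C ↦ W (e.map Subtype.val)) = w C := funext
    fun e ↦ (injective_sym2Map_val_connectedComponent G).extend_apply _ _ ⟨C, e⟩
  have hmem {u v : V} (huv : G.Adj u v) : v ∈ (G.connectedComponentMk u).supp :=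
    SimpleGraph.ConnectedComponent.sound huv.symm.reachable
  have hval {u v : V} (huv : G.Adj u v) :
      W s(u, v) = w (G.connectedComponentMk u) s(⟨u, rfl⟩, ⟨v, hmem huv⟩) :=
    congrFun (hW _) s(⟨u, rfl⟩, ⟨v, hmem huv⟩)
  refine ⟨W, fun e ↦ ?_, fun u v huv c ↦ ?_⟩
  · induction e with | h u v =>
    intro huv
    rw [hval huv]
    exact hw _ _ huv
  · rw [hval huv, ← colorDeg_toSimpleGraph (G.connectedComponentMk u) W c ⟨u, rfl⟩,
      ← colorDeg_toSimpleGraph (G.connectedComponentMk u) W c ⟨v, hmem huv⟩, hW]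
    exact hirr _ ⟨u, rfl⟩ ⟨v, hmem huv⟩ huv c

/-- Each vertex has its own colour, which occurs once on every edge incident with it. -/
theorem lirTwoLE_card_of_two_le_degree (hdeg : ∀ v, 2 ≤ G.degree v) :
    LIRtwoLE G (Fintype.card V) := by
  let vert := (Fintype.equivFin V).symm
  let w : Sym2 V → Fin (Fintype.card V) → ℕ := fun e i ↦ if vert i ∈ e then 1 else 0
  have hcenter (i) : colorDeg G w i (vert i) = G.degree (vert i) := by
    simp [colorDeg_eq_sum_neighborFinset, w]
  have hleaf (i) {x : V} (hx : G.Adj x (vert i)) : colorDeg G w i x = 1 := by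
    simp [colorDeg_eq_sum_neighborFinset, w, hx.ne', hx]
  refine ⟨w, fun e ↦ ?_, fun u v huv i hi ↦ ?_⟩
  · induction e with | h u v =>
    intro huv
    have hends : ({x | x ∈ s(u, v)} : Finset V) = {u, v} := by ext; simp
    rw [vert.sum_comp fun x ↦ if x ∈ s(u, v) then 1 else 0, ← card_filter, hends,
      card_pair (SimpleGraph.Adj.ne huv)]
  · obtain rfl | rfl : vert i = u ∨ vert i = v := by
      by_contra h
      simp [w, h] at hi
    · rw [hcenter, hleaf i huv.symm]
      exact Nat.ne_of_gt (hdeg _)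
    · rw [hcenter, hleaf i huv]
      exact Nat.ne_of_lt (hdeg _)

end Coloring

section Join

open scoped symmDiff

theorem odd_card_symmDiff {V : Type*} (S T : Finset V) : Odd #(S ∆ T) ↔ ¬(Odd #S ↔ Odd #T) := by
  have hS := card_sdiff_add_card_inter S T
  have hT := card_sdiff_add_card_inter T S
  rw [symmDiff_def, sup_eq_union, card_union_of_disjoint disjoint_sdiff_sdiff]
  rw [inter_comm] at hT
  grind

theorem degree_eq_card {V : Type*} {G : SimpleGraph V} {x : V} {_ : Fintype (G.neighborSet x)}
    {s : Finset V} (h : ∀ y, G.Adj x y ↔ y ∈ s) : G.degree x = #s := by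
  rw [← SimpleGraph.card_neighborFinset_eq_degree]
  congr
  ext y
  rw [SimpleGraph.mem_neighborFinset, h]

variable {V : Type*} [Fintype V] {K : SimpleGraph V} {S T : Finset V} {a b : V}

/-- `K` has a `T`-join: a subgraph whose vertices of odd degree are exactly those in `T`. -/
def HasJoin (K : SimpleGraph V) (T : Finset V) : Prop :=
  ∃ J ≤ K, ∀ x, Odd (J.degree x) ↔ x ∈ T

theorem hasJoin_empty (K : SimpleGraph V) : HasJoin K ∅ :=
  ⟨⊥, bot_le, by simp⟩

theorem HasJoin.symmDiff (hS : HasJoin K S) (hT : HasJoin K T) : HasJoin K (S ∆ T) := by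
  obtain ⟨I, hIK, hI⟩ := hS
  obtain ⟨J, hJK, hJ⟩ := hT
  refine ⟨I ∆ J, symmDiff_le_sup.trans (sup_le hIK hJK), fun x ↦ ?_⟩
  have hneighbor : (I ∆ J).neighborFinset x = I.neighborFinset x ∆ J.neighborFinset x := by
    ext y
    simp only [SimpleGraph.mem_neighborFinset, mem_symmDiff]
    rfl
  rw [← SimpleGraph.card_neighborFinset_eq_degree, hneighbor, odd_card_symmDiff,
    SimpleGraph.card_neighborFinset_eq_degree, SimpleGraph.card_neighborFinset_eq_degree, hI, hJ,
    mem_symmDiff]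
  tauto

theorem hasJoin_of_adj (hab : K.Adj a b) : HasJoin K ({a} ∆ {b}) := by
  refine ⟨SimpleGraph.edge a b, (SimpleGraph.edge_le_iff K).2 (.inr hab), fun x ↦ ?_⟩
  have hne := hab.ne
  have hadj (y) : (SimpleGraph.edge a b).Adj x y ↔
      y ∈ (if x = a then {b} else if x = b then {a} else ∅ : Finset V) := by
    rw [SimpleGraph.edge_adj]
    grind
  rw [degree_eq_card hadj, mem_symmDiff, mem_singleton, mem_singleton]
  grind

theorem hasJoin_of_reachable (hab : K.Reachable a b) : HasJoin K ({a} ∆ {b}) := by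
  obtain ⟨p⟩ := hab
  induction p with
  | nil => simpa using hasJoin_empty K
  | @cons a c b hac _ ih =>
    have := (hasJoin_of_adj hac).symmDiff ih
    rwa [symmDiff_assoc, symmDiff_symmDiff_cancel_left] at this

theorem hasJoin_of_even_card (hT : Even #T) (hreach : ∀ a ∈ T, ∀ b ∈ T, K.Reachable a b) :
    HasJoin K T := by
  induction T using Finset.strongInduction with | H T ih =>
  obtain rfl | hne := T.eq_empty_or_nonempty
  · exact hasJoin_empty K
  have hcard : 1 < #T := by grind
  obtain ⟨a, ha, b, hb, hab⟩ := one_lt_card.1 hcard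
  have hsplit : T = ((T.erase a).erase b) ∆ ({a} ∆ {b}) := by
    ext
    simp only [mem_symmDiff, mem_erase, mem_singleton]
    grind
  rw [hsplit]
  refine (ih ((T.erase a).erase b) ?_ ?_ ?_).symmDiff (hasJoin_of_reachable (hreach a ha b hb))
  · exact Finset.ssubset_of_subset_of_ssubset (erase_subset _ _) (erase_ssubset ha)
  · grind
  · exact fun x hx y hy ↦ hreach x (by grind) y (by grind)

end Join

section TwoColors

variable {V : Type*} [Fintype V] [DecidableEq V] {H J S : SimpleGraph V}

theorem sum_colorDeg {k : ℕ} {w : Sym2 V → Fin k → ℕ} (hw : ∀ e ∈ H.edgeSet, ∑ c, w e c = 2)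
    (x : V) : ∑ c, colorDeg H w c x = 2 * H.degree x := by
  simp only [colorDeg_eq_sum_neighborFinset]
  rw [sum_comm, sum_congr rfl fun y hy ↦ hw s(x, y) (by simpa using hy)]
  simp [mul_comm]

/-- Colour `0` occurs once on the edges of `J` and twice on those of `S`. -/
theorem lirTwoLE_two_of_disjoint_subgraphs (hJH : J ≤ H) (hSH : S ≤ H) (hJS : Disjoint J S)
    (hzero : ∀ u v, J.Adj u v ∨ S.Adj u v →
      J.degree u + 2 * S.degree u ≠ J.degree v + 2 * S.degree v)
    (hone : ∀ u v, H.Adj u v → ¬ S.Adj u v →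
      2 * H.degree u + (J.degree v + 2 * S.degree v) ≠
        2 * H.degree v + (J.degree u + 2 * S.degree u)) :
    LIRtwoLE H 2 := by
  let m : Sym2 V → ℕ := fun e ↦ if e ∈ S.edgeSet then 2 else if e ∈ J.edgeSet then 1 else 0
  let w : Sym2 V → Fin 2 → ℕ := fun e ↦ ![m e, 2 - m e]
  have hm (e) : m e ≤ 2 := by grind
  have hw : ∀ e ∈ H.edgeSet, ∑ c, w e c = 2 := fun e _ ↦ by simp [w, hm e]
  have hdeg_zero (x) : colorDeg H w 0 x = J.degree x + 2 * S.degree x := by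
    have hsub {L : SimpleGraph V} (hLH : L ≤ H) :
      {y ∈ H.neighborFinset x | L.Adj x y} = L.neighborFinset x := by
      ext y; simpa using @hLH x y
    have hval : ∀ y ∈ H.neighborFinset x, w s(x, y) 0 =
        (if J.Adj x y then 1 else 0) + 2 * if S.Adj x y then 1 else 0 := fun y _ ↦ by
      have := SimpleGraph.disjoint_left.1 hJS x y
      simp only [w, m, Matrix.cons_val_zero, SimpleGraph.mem_edgeSet]
      grind
    rw [colorDeg_eq_sum_neighborFinset, sum_congr rfl hval, sum_add_distrib, ← mul_sum,
      ← card_filter, ← card_filter, hsub hJH, hsub hSH]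
    rfl
  have hdeg_one (x) : J.degree x + 2 * S.degree x + colorDeg H w 1 x = 2 * H.degree x := by
    rw [← hdeg_zero, ← sum_colorDeg hw x, Fin.sum_univ_two]
  refine ⟨w, hw, fun u v huv c hc ↦ ?_⟩
  fin_cases c
  · have hmem : J.Adj u v ∨ S.Adj u v := by
      by_contra! h
      simp [w, m, h] at hc
    simpa [hdeg_zero] using hzero u v hmem
  · have hmem : ¬S.Adj u v := fun h ↦ by simp [w, m, h] at hc
    have := hone u v huv hmem
    have hu := hdeg_one u
    have hv := hdeg_one v
    change colorDeg H w 1 u ≠ colorDeg H w 1 v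
    lia

end TwoColors

section IsolatedEdge

variable {V : Type*} {G : SimpleGraph V} {u v : V}

/-- The edge `uv` is a connected component of `G`. -/
def IsIsolatedEdge (G : SimpleGraph V) (u v : V) : Prop :=
  G.neighborSet u = {v} ∧ G.neighborSet v = {u}

theorem IsIsolatedEdge.symm (h : IsIsolatedEdge G u v) : IsIsolatedEdge G v u :=
  ⟨h.2, h.1⟩

theorem IsIsolatedEdge.adj (h : IsIsolatedEdge G u v) : G.Adj u v :=
  h.1.ge rfl

theorem IsIsolatedEdge.eq_or_eq_of_reachable (h : IsIsolatedEdge G u v) {w : V}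
    (huw : G.Reachable u w) : w = u ∨ w = v := by
  by_contra hw
  obtain ⟨p⟩ := huw
  obtain ⟨d, -, hd, hd'⟩ := p.exists_boundary_dart {u, v} (by simp) (by simpa using hw)
  obtain hd | hd := hd
  · exact hd' (.inr (h.1.le (hd ▸ d.adj)))
  · exact hd' (.inl (h.2.le (hd ▸ d.adj)))

theorem IsIsolatedEdge.of_toSimpleGraph {C : G.ConnectedComponent} {u v : C}
    (h : IsIsolatedEdge C.toSimpleGraph u v) : IsIsolatedEdge G u v := by
  constructor
  · rw [← image_val_neighborSet_toSimpleGraph, h.1, Set.image_singleton]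
  · rw [← image_val_neighborSet_toSimpleGraph, h.2, Set.image_singleton]

theorem neighborSet_eq_singleton_of_degree_eq_one [Fintype (G.neighborSet u)]
    (hadj : G.Adj u v) (hdeg : G.degree u = 1) : G.neighborSet u = {v} := by
  obtain ⟨x, hx⟩ := SimpleGraph.degree_eq_one_iff_existsUnique_adj.1 hdeg
  ext y
  grind [SimpleGraph.mem_neighborSet]

end IsolatedEdge

section Lobe

variable {V : Type*} {H : SimpleGraph V} {X : Set V} {c : V}

/-- `X` is a nonempty union of components of `H - c`. Inclusion-minimal lobes play the role of
leaf blocks: they contain no cut vertex. -/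
structure IsLobe (H : SimpleGraph V) (c : V) (X : Set V) : Prop where
  nonempty : X.Nonempty
  notMem : c ∉ X
  mem_insert : ∀ x ∈ X, ∀ y, H.Adj x y → y ∈ insert c X

theorem exists_adj_notMem (hH : H.Connected) {Y : Set V} {x : V} (hY : Y.Nonempty) (hx : x ∉ Y) :
    ∃ y ∈ Y, ∃ z ∉ Y, H.Adj y z := by
  obtain ⟨y, hy⟩ := hY
  obtain ⟨p⟩ := hH y x
  obtain ⟨d, -, hd⟩ := p.exists_boundary_dart Y hy hx
  exact ⟨d.fst, hd.1, d.snd, hd.2, d.adj⟩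

theorem IsLobe.mem_of_minimal (hH : H.Connected) (hX : IsLobe H c X)
    (hmin : ∀ d Y, IsLobe H d Y → ¬ Y ⊂ X) {x : V} (hx : x ∈ X) {Y : Set V}
    (hY : IsLobe H x Y) : c ∈ Y := by
  by_contra hc
  obtain hYX | hYX := (Y ∩ X).eq_empty_or_nonempty
  · obtain ⟨y, hy, z, hz, hyz⟩ := exists_adj_notMem hH hY.nonempty hY.notMem
    obtain rfl : z = x := (hY.mem_insert y hy z hyz).resolve_right hz
    obtain rfl | hyX := hX.mem_insert z hx y hyz.symm
    · exact hc hy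
    · exact Set.notMem_empty y (hYX ▸ ⟨hy, hyX⟩)
  · refine hmin x (Y ∩ X) ⟨hYX, fun h ↦ hY.notMem h.1, fun y hy z hyz ↦ ?_⟩
      ⟨Set.inter_subset_right, fun h ↦ hY.notMem (h hx).1⟩
    have hzY := hY.mem_insert y hy.1 z hyz
    have hzX := hX.mem_insert y hy.2 z hyz
    grind

theorem IsLobe.reachable_of_minimal (hH : H.Connected) (hX : IsLobe H c X)
    (hmin : ∀ d Y, IsLobe H d Y → ¬ Y ⊂ X) {x : V} (hx : x ∈ X) {y : V} (hy : y ≠ x) :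
    (H.deleteIncidenceSet x).Reachable y c := by
  let Y : Set V := {z | z ≠ x ∧ (H.deleteIncidenceSet x).Reachable y z}
  have hY : IsLobe H x Y := by
    refine ⟨⟨y, hy, .rfl⟩, fun h ↦ h.1 rfl, fun z hz t hzt ↦ ?_⟩
    by_cases ht : t = x
    · exact .inl ht
    · exact .inr ⟨ht, hz.2.trans
        (SimpleGraph.deleteIncidenceSet_adj.2 ⟨hzt, hz.1, ht⟩).reachable⟩
  exact (hX.mem_of_minimal hH hmin hx hY).2

theorem exists_minimal_isLobe [Finite V] [Nontrivial V] (H : SimpleGraph V) :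
    ∃ c X, IsLobe H c X ∧ ∀ d Y, IsLobe H d Y → ¬ Y ⊂ X := by
  obtain ⟨c, x, hcx⟩ := exists_pair_ne V
  have hlobe : IsLobe H c {c}ᶜ := ⟨⟨x, hcx.symm⟩, by simp, fun _ _ y _ ↦ by simp [em]⟩
  obtain ⟨X, ⟨c, hX⟩, hmin⟩ := exists_minimal_of_wellFoundedLT (fun X ↦ ∃ c, IsLobe H c X)
    ⟨_, c, hlobe⟩
  exact ⟨c, X, hX, fun d Y hY hYX ↦ hYX.2 (hmin ⟨d, hY⟩ hYX.1)⟩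

end Lobe

section Root

variable {V : Type*} [Fintype V] {H : SimpleGraph V}

/-- A root of a connected graph `H`: a non-cut vertex `r`, together with the set `R` of its
neighbours that are to be joined to `r` by two edges of colour `0`. The two degree conditions
keep the edges at `r` locally irregular in either colour. -/
structure IsRoot (H : SimpleGraph V) (r : V) (R : Finset V) : Prop where
  subset : R ⊆ H.neighborFinset r
  reachable : ∀ x y, x ≠ r → y ≠ r → (H.deleteIncidenceSet r).Reachable x y
  degree_ne : ∀ a ∈ R, H.degree a + 1 ≠ 2 * #R
  le_degree : ∀ a, H.Adj r a → a ∉ R → 2 * H.degree r ≤ H.degree a + 2 * #R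

theorem IsLobe.exists_degree_le {X : Set V} {c : V} (hX : IsLobe H c X) :
    ∃ r ∈ X, (∀ a, H.Adj r a → a ≠ c → H.degree a ≤ H.degree r) ∧
      (H.Adj r c → ∀ a, H.Adj r a → a ≠ c → H.degree a = H.degree r → H.Adj a c) := by
  -- Maximize the degree, breaking ties in favour of the vertices not adjacent to `c`.
  obtain ⟨r, hr, hmax⟩ := X.toFinite.exists_maximalFor
    (fun x ↦ 2 * H.degree x + if H.Adj x c then 0 else 1) X hX.nonempty
  have hle : ∀ a, H.Adj r a → a ≠ c → 2 * H.degree a + (if H.Adj a c then 0 else 1) ≤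
      2 * H.degree r + if H.Adj r c then 0 else 1 := fun a hra hac ↦ by
    have := hmax ((hX.mem_insert r hr a hra).resolve_left hac)
    grind
  refine ⟨r, hr, fun a hra hac ↦ ?_, fun hrc a hra hac ↦ ?_⟩ <;>
  · have := hle a hra hac
    split_ifs at this <;> grind

theorem isIsolatedEdge_of_degree_eq_one {u v : V} (hadj : H.Adj u v) (hu : H.degree u = 1)
    (hv : H.degree v = 1) : IsIsolatedEdge H u v :=
  ⟨neighborSet_eq_singleton_of_degree_eq_one hadj hu,
    neighborSet_eq_singleton_of_degree_eq_one hadj.symm hv⟩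

theorem degree_ne_one_of_minimal_isLobe {X : Set V} (hmin : ∀ d Y, IsLobe H d Y → ¬ Y ⊂ X)
    {u v : V} (hu : u ∈ X) (hv : v ∈ X) (huv : H.Adj u v) : H.degree v ≠ 1 := fun hdeg ↦ by
  have hN := neighborSet_eq_singleton_of_degree_eq_one huv.symm hdeg
  have hlobe : IsLobe H u {v} := ⟨Set.singleton_nonempty v, huv.ne, by
    rintro _ rfl y hy
    exact .inl (hN.le hy)⟩
  exact hmin u {v} hlobe ⟨Set.singleton_subset_iff.2 hv, fun h ↦ huv.ne (h hu)⟩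

/-- All neighbours of `r` go into `R`, unless one of them has degree `2 * H.degree r - 1`; the
choice of `r` in a minimal lobe makes this neighbour unique, and it is left out of `R`. -/
theorem exists_isRoot [Nontrivial V] (hH : H.Connected) (hclique : H.CliqueFree 3)
    (hiso : ∀ u v, ¬ IsIsolatedEdge H u v) :
    ∃ r R, IsRoot H r R := by
  obtain ⟨c, X, hX, hmin⟩ := exists_minimal_isLobe H
  obtain ⟨r, hr, hle, heq⟩ := hX.exists_degree_le
  have hreach (x y) (hx : x ≠ r) (hy : y ≠ r) : (H.deleteIncidenceSet r).Reachable x y :=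
    (hX.reachable_of_minimal hH hmin hr hx).trans (hX.reachable_of_minimal hH hmin hr hy).symm
  have hpos {x y} (h : H.Adj x y) : 0 < H.degree x := (H.degree_pos_iff_exists_adj x).2 ⟨y, h⟩
  have hleaf {x y} (h : H.Adj x y) (hx : H.degree x = 1) : H.degree y ≠ 1 :=
    fun hy ↦ hiso x y (isIsolatedEdge_of_degree_eq_one h hx hy)
  by_cases hbad : ∃ a, H.Adj r a ∧ H.degree a + 1 = 2 * H.degree r
  · obtain ⟨a, hra, ha⟩ := hbad
    obtain rfl : a = c := by
      by_contra hac
      have := hle a hra hac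
      have := hpos hra.symm
      exact hleaf hra (by lia) (by lia)
    have hr_one : H.degree r ≠ 1 := fun h ↦ hleaf hra h (by lia)
    have hcard : #((H.neighborFinset r).erase a) + 1 = H.degree r :=
      card_erase_add_one (by simpa using hra)
    refine ⟨r, (H.neighborFinset r).erase a, erase_subset _ _, hreach, fun b hb hbdeg ↦ ?_,
      fun b hrb hb ↦ ?_⟩
    · obtain ⟨hba, hrb⟩ : b ≠ a ∧ H.Adj r b := by simpa using hb
      have hlt : H.degree b < H.degree r := lt_of_le_of_ne (hle b hrb hba) fun h ↦
        hclique _ (SimpleGraph.is3Clique_triple_iff.2 ⟨hrb, hra, heq hra b hrb hba h⟩)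
      have hbX : b ∈ X := (hX.mem_insert r hr b hrb).resolve_left hba
      exact degree_ne_one_of_minimal_isLobe hmin hr hbX hrb (by lia)
    · obtain rfl : b = a := by simpa [hrb] using hb
      lia
  · push Not at hbad
    refine ⟨r, H.neighborFinset r, Subset.rfl, hreach, fun a ha ↦ ?_, fun a hra ha ↦ ?_⟩
    · exact hbad a (by simpa using ha)
    · exact absurd ((H.mem_neighborFinset r a).2 hra) ha

end Root

section Bipartite

variable {V : Type*} {H J : SimpleGraph V} {r : V} {R : Finset V}

theorem coloring_bool_eq_iff_ne {u v : V} (f : H.Coloring Bool) (huv : H.Adj u v) (i : Bool) :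
    f u = i ↔ f v ≠ i := by
  rw [Bool.eq_not.2 (f.valid huv)]
  cases f v <;> cases i <;> decide

theorem exists_le_adj_iff_mem (f : H.Coloring Bool) (i : Bool) {N : V → Finset V}
    (hN : ∀ a, f a ≠ i → ∀ b ∈ N a, H.Adj a b) :
    ∃ S ≤ H, ∀ {a b}, f a ≠ i → (S.Adj a b ↔ b ∈ N a) := by
  refine ⟨.fromRel fun a b ↦ f a ≠ i ∧ b ∈ N a, ?_, fun {a b} ha ↦ ?_⟩
  · rintro a b ⟨-, ⟨ha, hab⟩ | ⟨hb, hba⟩⟩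
    · exact hN a ha b hab
    · exact (hN b hb a hba).symm
  · refine ⟨?_, fun hb ↦ ⟨(hN a ha b hb).ne, .inl ⟨ha, hb⟩⟩⟩
    rintro ⟨-, h | ⟨hb, hba⟩⟩
    · exact h.2
    · exact absurd ((coloring_bool_eq_iff_ne f (hN b hb a hba).symm i).2 hb) ha

variable [Fintype V]

theorem IsRoot.adj (hR : IsRoot H r R) {a : V} (ha : a ∈ R) : H.Adj r a :=
  (H.mem_neighborFinset r a).1 (hR.subset ha)

theorem IsRoot.exists_adj_of_degree_add_two_eq (hR : IsRoot H r R)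
    (hJ : J ≤ H.deleteIncidenceSet r) {a : V} (ha : a ∈ R) (hdeg : J.degree a + 2 = 2 * #R) :
    ∃ y ≠ r, H.Adj a y ∧ ¬ J.Adj a y := by
  by_contra! h
  have hra : r ∈ H.neighborFinset a := by simpa using (hR.adj ha).symm
  have hadj (y) : J.Adj a y ↔ y ∈ (H.neighborFinset a).erase r := by
    rw [mem_erase, SimpleGraph.mem_neighborFinset]
    exact ⟨fun hay ↦ ⟨(SimpleGraph.deleteIncidenceSet_adj.1 (hJ hay)).2.2,
      (SimpleGraph.deleteIncidenceSet_adj.1 (hJ hay)).1⟩, fun hy ↦ h y hy.1 hy.2⟩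
  have hJdeg : J.degree a = #((H.neighborFinset a).erase r) := degree_eq_card hadj
  have hHdeg : #((H.neighborFinset a).erase r) + 1 = H.degree a := card_erase_add_one hra
  exact hR.degree_ne a ha (by lia)

/-- Every vertex of `R` is joined to `r`; if this gives it the same colour degree as `r`, it gets
one more doubled edge, whose other end lies on the side of `r`. -/
theorem IsRoot.exists_doubled (hR : IsRoot H r R) (f : H.Coloring Bool)
    (hJ : J ≤ H.deleteIncidenceSet r) :
    ∃ S ≤ H, Disjoint J S ∧ (∀ a, S.Adj r a ↔ a ∈ R) ∧
      (∀ a ∈ R, J.degree a + 2 * S.degree a ≠ 2 * #R) ∧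
      ∀ a, H.Adj r a → a ∉ R → S.degree a = 0 := by
  have hJr (a) : ¬ J.Adj a r := fun h ↦ (SimpleGraph.deleteIncidenceSet_adj.1 (hJ h)).2.2 rfl
  have hHr : ∀ a ∈ R, H.Adj a r := fun a ha ↦ (hR.adj ha).symm
  have : Nonempty V := ⟨r⟩
  choose! p hpr hHp hJp using fun a ha hdeg ↦
    hR.exists_adj_of_degree_add_two_eq (a := a) hJ ha hdeg
  let N (a : V) : Finset V :=
    if a ∈ R then if J.degree a + 2 = 2 * #R then {r, p a} else {r} else ∅
  have hN {a b} (hb : b ∈ N a) : H.Adj a b ∧ ¬ J.Adj a b := by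
    grind
  obtain ⟨S, hSH, hS⟩ := exists_le_adj_iff_mem f (f r) fun a _ b hb ↦ (hN hb).1
  have hSr (a) : S.Adj r a ↔ a ∈ R := by
    constructor
    · intro h
      have := (hS (f.valid (hSH h).symm)).1 h.symm
      grind
    · intro ha
      exact ((hS (f.valid (hHr a ha))).2 (by grind)).symm
  refine ⟨S, hSH, ?_, hSr, fun a ha ↦ ?_, fun a hra ha ↦ ?_⟩
  · refine SimpleGraph.disjoint_left.2 fun a b hJab hSab ↦ ?_
    by_cases ha : f a = f r
    · have hb := (coloring_bool_eq_iff_ne f (hSH hSab) (f r)).1 ha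
      exact (hN ((hS hb).1 hSab.symm)).2 hJab.symm
    · exact (hN ((hS ha).1 hSab)).2 hJab
  · have hadj (b) : S.Adj a b ↔ b ∈ N a := hS (f.valid (hHr a ha))
    rw [degree_eq_card hadj]
    simp only [N, if_pos ha]
    split_ifs with hdeg
    · rw [card_pair (hpr a ha hdeg).symm]
      lia
    · rwa [card_singleton]
  · have hadj (b) : S.Adj a b ↔ b ∈ N a := hS (f.valid hra.symm)
    rw [degree_eq_card hadj]
    simp only [N, if_neg ha, card_empty]

variable [DecidableEq V]

theorem lirTwoLE_two_of_parity {S : SimpleGraph V} (hJH : J ≤ H) (hSH : S ≤ H)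
    (hJS : Disjoint J S) (r : V)
    (hparity : ∀ u v, H.Adj u v → u ≠ r → v ≠ r → ¬ (Odd (J.degree u) ↔ Odd (J.degree v)))
    (hzero : ∀ a, J.Adj r a ∨ S.Adj r a →
      J.degree a + 2 * S.degree a ≠ J.degree r + 2 * S.degree r)
    (hone : ∀ a, H.Adj r a → ¬ S.Adj r a → 2 * H.degree r + (J.degree a + 2 * S.degree a) ≠
      2 * H.degree a + (J.degree r + 2 * S.degree r)) : LIRtwoLE H 2 := by
  refine lirTwoLE_two_of_disjoint_subgraphs hJH hSH hJS (fun u v huv ↦ ?_) (fun u v huv hS ↦ ?_)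
  · have hH : H.Adj u v := huv.elim (@hJH u v) (@hSH u v)
    obtain rfl | hu := eq_or_ne u r
    · exact (hzero v huv).symm
    obtain rfl | hv := eq_or_ne v r
    · exact hzero u (by simpa [SimpleGraph.adj_comm] using huv)
    have := hparity u v hH hu hv
    grind
  · obtain rfl | hu := eq_or_ne u r
    · exact hone v huv hS
    obtain rfl | hv := eq_or_ne v r
    · exact (hone u huv.symm (by simpa [SimpleGraph.adj_comm] using hS)).symm
    have := hparity u v huv hu hv
    grind

theorem IsRoot.lirTwoLE_two (hR : IsRoot H r R) (f : H.Coloring Bool)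
    (heven : Even #{x | x ≠ r ∧ f x = f r}) : LIRtwoLE H 2 := by
  obtain ⟨J, hJ, hJodd⟩ := hasJoin_of_even_card (K := H.deleteIncidenceSet r) heven
    fun a ha b hb ↦ hR.reachable a b (by simp_all) (by simp_all)
  obtain ⟨S, hSH, hJS, hSr, hSdeg, hSzero⟩ := hR.exists_doubled f hJ
  have hJr (a) : ¬ J.Adj r a := fun h ↦ (SimpleGraph.deleteIncidenceSet_adj.1 (hJ h)).2.1 rfl
  have hJH : J ≤ H := hJ.trans (SimpleGraph.deleteIncidenceSet_le _ _)
  have hdeg_r : J.degree r + 2 * S.degree r = 2 * #R := by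
    rw [degree_eq_card hSr, degree_eq_card (s := ∅) (by simpa using hJr)]
    simp
  have hJlt {a} (hra : H.Adj r a) : J.degree a < H.degree a :=
    card_lt_card ⟨fun y ↦ by simpa using @hJH a y, fun h ↦ hJr a <| by
      simpa [SimpleGraph.adj_comm] using h ((H.mem_neighborFinset a r).2 hra.symm)⟩
  refine lirTwoLE_two_of_parity hJH hSH hJS r (fun u v huv hu hv ↦ ?_) (fun a hra ↦ ?_)
    (fun a hra hS ↦ ?_)
  · have := coloring_bool_eq_iff_ne f huv (f r)
    simp only [hJodd, mem_filter, mem_univ, true_and]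
    tauto
  · rw [hdeg_r]
    exact hSdeg a ((hSr a).1 (hra.resolve_left (hJr a)))
  · have haR := (hSr a).not.1 hS
    have := hJlt hra
    have := hR.le_degree a hra haR
    rw [hSzero a hra haR]
    lia

theorem lirTwoLE_two_of_even_side (hH : H.Connected) (f : H.Coloring Bool) {i : Bool}
    (heven : Even #{x | f x = i}) : LIRtwoLE H 2 := by
  obtain ⟨J, hJH, hJ⟩ := hasJoin_of_even_card heven fun a _ b _ ↦ hH a b
  have hparity (u v) (huv : H.Adj u v) : ¬ (Odd (J.degree u) ↔ Odd (J.degree v)) := by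
    have := coloring_bool_eq_iff_ne f huv i
    simp only [hJ, mem_filter, mem_univ, true_and]
    tauto
  refine lirTwoLE_two_of_disjoint_subgraphs hJH bot_le disjoint_bot_right (fun u v huv ↦ ?_)
    (fun u v huv _ ↦ ?_)
  · have := hparity u v (by simpa using huv.imp_left (@hJH u v))
    grind
  · have := hparity u v huv
    grind

theorem lirTwoLE_two_of_connected (hH : H.Connected) (hbip : H.IsBipartite)
    (hiso : ∀ u v, ¬ IsIsolatedEdge H u v) : LIRtwoLE H 2 := by
  obtain _ | _ := subsingleton_or_nontrivial V
  · rw [Subsingleton.elim H ⊥]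
    exact lirTwoLE_bot 2
  obtain ⟨r, R, hR⟩ := exists_isRoot hH (hbip.cliqueFree (by norm_num)) hiso
  let f : H.Coloring Bool := hbip.toColoring (by simp)
  by_cases hside : Even #{x | f x = f r}
  · exact lirTwoLE_two_of_even_side hH f hside
  · refine hR.lirTwoLE_two f ?_
    have herase : ({x | x ≠ r ∧ f x = f r} : Finset V) = ({x | f x = f r} : Finset V).erase r := by
      ext
      simp
    have hcard : #(({x | f x = f r} : Finset V).erase r) + 1 = #{x | f x = f r} :=
      card_erase_add_one (by simp)
    rw [herase]
    grind

theorem lirTwoLE_two_of_isBipartite (hbip : H.IsBipartite)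
    (hiso : ∀ u v, ¬ IsIsolatedEdge H u v) : LIRtwoLE H 2 :=
  .of_components fun C ↦ lirTwoLE_two_of_connected C.connected_toSimpleGraph
    (hbip.of_hom C.toSimpleGraph_hom) fun u v h ↦ hiso u v h.of_toSimpleGraph

end Bipartite

section Decomposition

variable {V : Type*} {G H K H' K' : SimpleGraph V} {u v w : V}

/-- The set of ends of isolated edges of `H`, which the choice of a decomposition minimizes. -/
def isolatedEdgeEnds (H : SimpleGraph V) : Set V :=
  {x | ∃ y, IsIsolatedEdge H x y}

/-- The triangle `uvw` is a connected component of `G`. -/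
def IsIsolatedTriangle (G : SimpleGraph V) (u v w : V) : Prop :=
  G.neighborSet u = {v, w} ∧ G.neighborSet v = {u, w} ∧ G.neighborSet w = {u, v}

/-- The edges of `G` are partitioned into two bipartite graphs `H` and `K`. -/
structure IsBipartiteDecomp (G H K : SimpleGraph V) : Prop where
  sup_eq : H ⊔ K = G
  disjoint : Disjoint H K
  left : H.IsBipartite
  right : K.IsBipartite

theorem IsBipartiteDecomp.symm (h : IsBipartiteDecomp G H K) : IsBipartiteDecomp G K H :=
  ⟨sup_comm H K ▸ h.sup_eq, h.disjoint.symm, h.right, h.left⟩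

/-- The graph obtained from `H` by replacing the edge `uv` with `uw`. -/
def replaceEdge (H : SimpleGraph V) (u v w : V) : SimpleGraph V :=
  H \ SimpleGraph.edge u v ⊔ SimpleGraph.edge u w

theorem exists_sup_eq_of_colorable_mul {m n : ℕ} (hG : G.Colorable (m * n)) :
    ∃ H K : SimpleGraph V, H ⊔ K = G ∧ Disjoint H K ∧ H.Colorable m ∧ K.Colorable n := by
  obtain ⟨f⟩ := hG
  let g (x : V) : Fin m × Fin n := finProdFinEquiv.symm (f x)
  have hg {x y : V} (hxy : G.Adj x y) : g x ≠ g y := fun h ↦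
    f.valid hxy (finProdFinEquiv.symm.injective h)
  let H : SimpleGraph V := G ⊓ SimpleGraph.comap (fun x ↦ (g x).1) ⊤
  refine ⟨H, G \ H, sup_sdiff_cancel_right inf_le_left, disjoint_sdiff_self_right,
    ⟨SimpleGraph.Coloring.mk (fun x ↦ (g x).1) fun h ↦ h.2⟩,
    ⟨SimpleGraph.Coloring.mk (fun x ↦ (g x).2) fun h h' ↦ ?_⟩⟩
  exact h.2 ⟨h.1, fun h'' ↦ hg h.1 (Prod.ext h'' h')⟩

theorem edge_adj_of_ne (huv : u ≠ v) : (SimpleGraph.edge u v).Adj u v :=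
  (SimpleGraph.edge_adj ..).2 ⟨.inl ⟨rfl, rfl⟩, huv⟩

theorem isBipartite_sup_edge (hH : H.IsBipartite) (huv : ¬ H.Reachable u v) :
    (H ⊔ SimpleGraph.edge u v).IsBipartite := by
  let f : H.Coloring Bool := hH.toColoring (by simp)
  let flip : Bool := f u == f v
  let g : V → Bool := fun x ↦ if H.Reachable u x then xor flip (f x) else f x
  refine (SimpleGraph.Coloring.mk g ?_ : (H ⊔ SimpleGraph.edge u v).Coloring Bool).colorable
  have hguv : g u ≠ g v := by
    simp only [g, if_neg huv, if_pos (SimpleGraph.Reachable.refl u), flip]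
    cases f u <;> cases f v <;> decide
  rintro x y (hxy | hxy)
  · have hiff : H.Reachable u x ↔ H.Reachable u y :=
      ⟨fun h ↦ h.trans hxy.reachable, fun h ↦ h.trans hxy.symm.reachable⟩
    have := f.valid hxy
    simp only [g, hiff]
    split_ifs <;> simpa
  · obtain ⟨⟨rfl, rfl⟩ | ⟨rfl, rfl⟩, -⟩ := (SimpleGraph.edge_adj ..).1 hxy
    · exact hguv
    · exact hguv.symm

theorem IsBipartiteDecomp.move (h : IsBipartiteDecomp G H K) (huv : K.Adj u v)
    (hbip : (H ⊔ SimpleGraph.edge u v).IsBipartite) :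
    IsBipartiteDecomp G (H ⊔ SimpleGraph.edge u v) (K \ SimpleGraph.edge u v) := by
  have hedge : SimpleGraph.edge u v ≤ K := (SimpleGraph.edge_le_iff K).2 (.inr huv)
  refine ⟨?_, ?_, hbip, h.right.mono_left sdiff_le⟩
  · rw [sup_assoc, sup_sdiff_cancel_right hedge, h.sup_eq]
  · exact disjoint_sup_left.2 ⟨h.disjoint.mono_right sdiff_le, disjoint_sdiff_self_right⟩

theorem IsBipartiteDecomp.isBipartite_sup_edge_of_isIsolatedEdge (h : IsBipartiteDecomp G H K)
    (huv : IsIsolatedEdge H u v) (huw : K.Adj u w) : (H ⊔ SimpleGraph.edge u w).IsBipartite := by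
  refine isBipartite_sup_edge h.left fun hreach ↦ ?_
  obtain rfl | rfl := huv.eq_or_eq_of_reachable hreach
  · exact huw.ne rfl
  · exact SimpleGraph.disjoint_left.1 h.disjoint _ _ huv.adj huw

theorem neighborSet_replaceEdge {x : V} (hx : x ∉ ({u, v, w} : Set V)) :
    (replaceEdge H u v w).neighborSet x = H.neighborSet x := by
  simp only [Set.mem_insert_iff, Set.mem_singleton_iff, not_or] at hx
  ext y
  simp [replaceEdge, SimpleGraph.edge_adj, hx]

theorem IsBipartiteDecomp.replaceEdge_replaceEdge (h : IsBipartiteDecomp G H K)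
    (huv : IsIsolatedEdge H u v) (hu : K.neighborSet u = {w}) :
    IsBipartiteDecomp G (replaceEdge H u v w) (replaceEdge K u w v) := by
  have huw : K.Adj u w := hu.ge rfl
  have hvw : v ≠ w := by
    rintro rfl
    exact SimpleGraph.disjoint_left.1 h.disjoint u v huv.adj huw
  have hnot : ¬ (K \ SimpleGraph.edge u w).Reachable u v := by
    rintro ⟨p⟩
    cases p with
    | nil => exact huv.adj.ne rfl
    | cons huz _ =>
      obtain rfl := hu.le huz.1
      exact huz.2 (edge_adj_of_ne huw.ne)
  have heq : (H ⊔ SimpleGraph.edge u w) \ SimpleGraph.edge u v = replaceEdge H u v w := by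
    have hdisj : Disjoint (SimpleGraph.edge u w) (SimpleGraph.edge u v) :=
      SimpleGraph.disjoint_left.2 fun x y ↦ by grind
    rw [sup_sdiff, hdisj.sdiff_eq_left, replaceEdge]
  rw [← heq]
  exact ((h.move huw (h.isBipartite_sup_edge_of_isIsolatedEdge huv huw)).symm.move
    (.inl huv.adj) (isBipartite_sup_edge (h.right.mono_left sdiff_le) hnot)).symm

theorem isIsolatedEdge_of_mem_isolatedEdgeEnds (huv : H.Adj u v) (hu : u ∈ isolatedEdgeEnds H) :
    IsIsolatedEdge H u v := by
  obtain ⟨y, hy⟩ := hu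
  obtain rfl : v = y := hy.1.le huv
  exact hy

theorem notMem_isolatedEdgeEnds_of_path (huv : H.Adj u v) (hvw : H.Adj v w) (huw : u ≠ w) :
    ∀ x ∈ ({u, v, w} : Set V), x ∉ isolatedEdgeEnds H := by
  rintro x (rfl | rfl | rfl)
  · exact fun h ↦ huw.symm ((isIsolatedEdge_of_mem_isolatedEdgeEnds huv h).2.le hvw)
  · exact fun h ↦ huw ((isIsolatedEdge_of_mem_isolatedEdgeEnds hvw h).1.le huv.symm)
  · exact fun h ↦ huw ((isIsolatedEdge_of_mem_isolatedEdgeEnds hvw.symm h).2.le huv.symm)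

theorem isolatedEdgeEnds_subset {S : Set V}
    (hagree : ∀ x ∉ S, H'.neighborSet x = H.neighborSet x)
    (hS : ∀ x ∈ S, x ∉ isolatedEdgeEnds H') : isolatedEdgeEnds H' ⊆ isolatedEdgeEnds H := by
  rintro x ⟨y, hxy⟩
  have hx : x ∉ S := fun h ↦ hS x h ⟨y, hxy⟩
  have hy : y ∉ S := fun h ↦ hS y h ⟨x, hxy.symm⟩
  exact ⟨y, (hagree x hx).symm.trans hxy.1, (hagree y hy).symm.trans hxy.2⟩

theorem exists_adj_adj_of_reachable (huv : K.Reachable u v) (hne : u ≠ v) (hadj : ¬ K.Adj u v) :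
    ∃ w x, K.Adj u w ∧ K.Adj w x ∧ x ≠ u ∧ (x = v ∨ ∃ y, K.Adj x y ∧ y ≠ w) := by
  obtain ⟨p, hp⟩ := huv.exists_isPath
  match p with
  | .nil => exact absurd rfl hne
  | .cons huw .nil => exact absurd huw hadj
  | .cons huw (.cons hwx .nil) => exact ⟨_, _, huw, hwx, hne.symm, .inl rfl⟩
  | .cons huw (.cons hwx (.cons hxy q)) =>
    simp only [SimpleGraph.Walk.cons_isPath_iff, SimpleGraph.Walk.support_cons] at hp
    have := q.start_mem_support
    exact ⟨_, _, huw, hwx, by grind, .inr ⟨_, hxy, by grind⟩⟩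

theorem neighborSet_of_isIsolatedEdge_sdiff_edge (huw : K.Adj u w) {z : V}
    (h : IsIsolatedEdge (K \ SimpleGraph.edge u w) u z) :
    z ≠ w ∧ K.neighborSet u = {w, z} ∧ K.neighborSet z = {u} := by
  have hz := h.adj
  have hzu := hz.1.ne
  have hzw : z ≠ w := by
    rintro rfl
    exact hz.2 (edge_adj_of_ne huw.ne)
  refine ⟨hzw, ?_, ?_⟩
  · rw [← h.1]
    ext y
    simp only [SimpleGraph.mem_neighborSet, SimpleGraph.sdiff_adj, SimpleGraph.edge_adj,
      Set.mem_insert_iff]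
    grind [huw.ne]
  · rw [← h.2]
    ext
    simp [SimpleGraph.edge_adj, hzw, hzu.symm]

/-- A decomposition into bipartite graphs whose set of ends of isolated edges is
inclusion-minimal. -/
structure IsMinimalDecomp (G H K : SimpleGraph V) : Prop extends IsBipartiteDecomp G H K where
  minimal : ∀ H' K', IsBipartiteDecomp G H' K' →
    ¬ isolatedEdgeEnds H' ∪ isolatedEdgeEnds K' ⊂ isolatedEdgeEnds H ∪ isolatedEdgeEnds K

theorem exists_isMinimalDecomp [Finite V] (h : IsBipartiteDecomp G H K) :
    ∃ H K, IsMinimalDecomp G H K := by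
  obtain ⟨p, hp, hmin⟩ := exists_minimalFor_of_wellFoundedLT
    (fun p : SimpleGraph V × SimpleGraph V ↦ IsBipartiteDecomp G p.1 p.2)
    (fun p ↦ isolatedEdgeEnds p.1 ∪ isolatedEdgeEnds p.2) ⟨(H, K), h⟩
  exact ⟨p.1, p.2, hp, fun H' K' h' hlt ↦ hlt.2 (hmin (j := (H', K')) h' hlt.1)⟩

namespace IsMinimalDecomp

theorem symm (h : IsMinimalDecomp G H K) : IsMinimalDecomp G K H :=
  ⟨h.toIsBipartiteDecomp.symm, fun H' K' h' ↦ by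
    rw [Set.union_comm, Set.union_comm (isolatedEdgeEnds K)]
    exact h.minimal K' H' h'.symm⟩

theorem exists_mem_isolatedEdgeEnds (h : IsMinimalDecomp G H K) (h' : IsBipartiteDecomp G H' K')
    {S : Set V} (hH : ∀ x ∉ S, H'.neighborSet x = H.neighborSet x)
    (hK : ∀ x ∉ S, K'.neighborSet x = K.neighborSet x) (huS : u ∈ S)
    (hu : u ∈ isolatedEdgeEnds H ∪ isolatedEdgeEnds K) :
    ∃ x ∈ S, x ∈ isolatedEdgeEnds H' ∪ isolatedEdgeEnds K' := by
  by_contra! hS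
  refine h.minimal H' K' h' ⟨Set.union_subset_union
    (isolatedEdgeEnds_subset hH fun x hx hxH ↦ hS x hx (.inl hxH))
    (isolatedEdgeEnds_subset hK fun x hx hxK ↦ hS x hx (.inr hxK)), fun hle ↦ hS u huS (hle hu)⟩

theorem exists_mem_isolatedEdgeEnds_of_move (h : IsMinimalDecomp G H K) (huv : K.Adj u v)
    (hbip : (H ⊔ SimpleGraph.edge u v).IsBipartite)
    (hu : u ∈ isolatedEdgeEnds H ∪ isolatedEdgeEnds K) :
    ∃ x ∈ ({u, v} : Set V), x ∈ isolatedEdgeEnds (H ⊔ SimpleGraph.edge u v) ∪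
      isolatedEdgeEnds (K \ SimpleGraph.edge u v) := by
  refine h.exists_mem_isolatedEdgeEnds (h.move huv hbip) (fun x hx ↦ ?_) (fun x hx ↦ ?_)
    (by simp) hu <;>
  · ext y
    simp only [Set.mem_insert_iff, Set.mem_singleton_iff, not_or] at hx
    simp [SimpleGraph.edge_adj, hx]

/-- Moving `uw` to `H` destroys the isolated edge `uv`, so by minimality it creates another one. -/
theorem exists_isIsolatedEdge_sdiff_edge (h : IsMinimalDecomp G H K) (huv : IsIsolatedEdge H u v)
    (huw : K.Adj u w) : ∃ z, IsIsolatedEdge (K \ SimpleGraph.edge u w) u z ∨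
      IsIsolatedEdge (K \ SimpleGraph.edge u w) w z := by
  have hvw : v ≠ w := by
    rintro rfl
    exact SimpleGraph.disjoint_left.1 h.disjoint u v huv.adj huw
  have huw' : (H ⊔ SimpleGraph.edge u w).Adj u w :=
    .inr (edge_adj_of_ne huw.ne)
  have huv' : (H ⊔ SimpleGraph.edge u w).Adj u v := .inl huv.adj
  have hpath := notMem_isolatedEdgeEnds_of_path huw'.symm huv' hvw.symm
  obtain ⟨x, rfl | rfl, hx | ⟨z, hz⟩⟩ := h.exists_mem_isolatedEdgeEnds_of_move huw
    (h.isBipartite_sup_edge_of_isIsolatedEdge huv huw) (.inl ⟨v, huv⟩)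
  · exact absurd hx (hpath _ (by simp))
  · exact ⟨z, .inl hz⟩
  · exact absurd hx (hpath _ (by simp))
  · exact ⟨z, .inr hz⟩

theorem not_isBipartite_sup_edge (h : IsMinimalDecomp G H K) (huv : IsIsolatedEdge H u v)
    (hG : ¬ IsIsolatedEdge G u v) : ¬ (K ⊔ SimpleGraph.edge u v).IsBipartite := by
  intro hbip
  have heq : (K ⊔ SimpleGraph.edge u v) ⊔ (H \ SimpleGraph.edge u v) = G :=
    (h.symm.move huv.adj hbip).sup_eq
  have hlone : ∀ x ∈ ({u, v} : Set V), (H \ SimpleGraph.edge u v).neighborSet x = ∅ := by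
    refine fun x hx ↦ Set.eq_empty_of_forall_notMem fun y ⟨hxy, hne⟩ ↦ ?_
    obtain rfl | rfl := hx
    · obtain rfl : y = v := huv.1.le hxy
      exact hne (edge_adj_of_ne hxy.ne)
    · obtain rfl : y = u := huv.2.le hxy
      exact hne (edge_adj_of_ne hxy.ne').symm
  have hKuv : (K ⊔ SimpleGraph.edge u v).Adj u v := .inr (edge_adj_of_ne huv.adj.ne)
  have hGK : ∀ x ∈ ({u, v} : Set V),
      G.neighborSet x = (K ⊔ SimpleGraph.edge u v).neighborSet x := fun x hx ↦ by
    rw [← heq, SimpleGraph.neighborSet_sup (G₂ := H \ SimpleGraph.edge u v), hlone x hx,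
      Set.union_empty]
  have hKiso (hK : IsIsolatedEdge (K ⊔ SimpleGraph.edge u v) u v) : IsIsolatedEdge G u v :=
    ⟨(hGK u (.inl rfl)).trans hK.1, (hGK v (.inr rfl)).trans hK.2⟩
  obtain ⟨x, hx, hxK | ⟨y, hxy⟩⟩ :=
    h.symm.exists_mem_isolatedEdgeEnds_of_move huv.adj hbip (.inr ⟨v, huv⟩)
  · obtain rfl | rfl := hx
    · exact hG (hKiso (isIsolatedEdge_of_mem_isolatedEdgeEnds hKuv hxK))
    · exact hG (hKiso (isIsolatedEdge_of_mem_isolatedEdgeEnds hKuv.symm hxK).symm)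
  · exact Set.singleton_ne_empty y (hxy.1.symm.trans (hlone x hx))

theorem exists_neighborSet_eq (h : IsMinimalDecomp G H K) (huv : IsIsolatedEdge H u v)
    (hG : ¬ IsIsolatedEdge G u v) : ∃ w, K.neighborSet w = {u, v} ∧ K.neighborSet v = {w} := by
  have hreach : K.Reachable u v := by
    by_contra hreach
    exact h.not_isBipartite_sup_edge huv hG (isBipartite_sup_edge h.right hreach)
  have hKuv : ¬ K.Adj u v := SimpleGraph.disjoint_left.1 h.disjoint u v huv.adj
  obtain ⟨w, x, huw, hwx, hxu, hx⟩ := exists_adj_adj_of_reachable hreach huv.adj.ne hKuv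
  obtain ⟨z, hz | hz⟩ := h.exists_isIsolatedEdge_sdiff_edge huv huw
  · exfalso
    obtain ⟨hzw, hu, hz⟩ := neighborSet_of_isIsolatedEdge_sdiff_edge huw hz
    have huz : K.Adj u z := hu.ge (.inr rfl)
    obtain ⟨t, ht | ht⟩ := h.exists_isIsolatedEdge_sdiff_edge huv huz
    · obtain ⟨htz, hu', ht⟩ := neighborSet_of_isIsolatedEdge_sdiff_edge huz ht
      obtain rfl : w = t := (hu'.le huw).resolve_left hzw.symm
      exact hxu (ht.le hwx)
    · rw [SimpleGraph.edge_comm] at ht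
      obtain ⟨htu, hz', -⟩ := neighborSet_of_isIsolatedEdge_sdiff_edge huz.symm ht
      exact htu (hz.le (hz'.ge (.inr rfl)))
  · rw [SimpleGraph.edge_comm] at hz
    obtain ⟨hzu, hw, hz⟩ := neighborSet_of_isIsolatedEdge_sdiff_edge huw.symm hz
    obtain rfl : x = z := (hw.le hwx).resolve_left hxu
    obtain rfl | ⟨y, hxy, hyw⟩ := hx
    · exact ⟨w, hw, hz⟩
    · exact absurd (hz.le hxy) hyw

theorem exists_path_component (h : IsMinimalDecomp G H K) (huv : IsIsolatedEdge H u v)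
    (hG : ¬ IsIsolatedEdge G u v) :
    ∃ w, K.neighborSet u = {w} ∧ K.neighborSet v = {w} ∧ K.neighborSet w = {u, v} := by
  obtain ⟨w, hw, hv⟩ := h.exists_neighborSet_eq huv hG
  obtain ⟨t, ht, hu⟩ := h.exists_neighborSet_eq huv.symm fun h' ↦ hG h'.symm
  have hwu : K.Adj w u := hw.ge (.inl rfl)
  obtain rfl : w = t := hu.le hwu.symm
  exact ⟨w, hu, hv, hw⟩

/-- If `w` had a neighbour in `H`, exchanging `uv` and `uw` between `H` and `K` would destroy the
isolated edge `uv` without creating another one. -/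
theorem neighborSet_eq_empty_of_path (h : IsMinimalDecomp G H K) (huv : IsIsolatedEdge H u v)
    (hu : K.neighborSet u = {w}) (hv : K.neighborSet v = {w}) : H.neighborSet w = ∅ := by
  by_contra! hne
  obtain ⟨y, hwy : H.Adj w y⟩ := hne
  have huw : u ≠ w := (show K.Adj u w from hu.ge rfl).ne
  have hvw : K.Adj v w := hv.ge rfl
  have huv_ne : u ≠ v := huv.adj.ne
  have huy : u ≠ y := by
    rintro rfl
    exact hvw.ne' (huv.1.le hwy.symm)
  have hH := notMem_isolatedEdgeEnds_of_path (H := replaceEdge H u v w)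
    (.inr (edge_adj_of_ne huw))
    (.inl ⟨hwy, by simp [SimpleGraph.edge_adj, hvw.ne', huw.symm]⟩) huy
  have hK := notMem_isolatedEdgeEnds_of_path (H := replaceEdge K u w v)
    (.inr (edge_adj_of_ne huv_ne))
    (.inl ⟨hvw, by simp [SimpleGraph.edge_adj, huv_ne.symm, hvw.ne]⟩) huw
  have hHv : v ∉ isolatedEdgeEnds (replaceEdge H u v w) := by
    rintro ⟨z, hz⟩
    obtain ⟨hvz, hne⟩ | hvz := hz.adj
    · obtain rfl := huv.2.le hvz
      exact hne (edge_adj_of_ne huv_ne).symm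
    · grind [hvw.ne]
  obtain ⟨x, hxS, hx | hx⟩ := h.exists_mem_isolatedEdgeEnds (h.replaceEdge_replaceEdge huv hu)
    (fun x hx ↦ neighborSet_replaceEdge hx)
    (fun x hx ↦ neighborSet_replaceEdge (by rwa [Set.pair_comm])) (Set.mem_insert u _)
    (.inl ⟨v, huv⟩)
  · obtain rfl | rfl | rfl := hxS
    · exact hH _ (by simp) hx
    · exact hHv hx
    · exact hH _ (by simp) hx
  · exact hK x hxS hx

theorem exists_isIsolatedTriangle (h : IsMinimalDecomp G H K) (huv : IsIsolatedEdge H u v)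
    (hG : ¬ IsIsolatedEdge G u v) : ∃ w, IsIsolatedTriangle G u v w := by
  obtain ⟨w, hu, hv, hw⟩ := h.exists_path_component huv hG
  have hHw := h.neighborSet_eq_empty_of_path huv hu hv
  refine ⟨w, ?_, ?_, ?_⟩ <;>
    simp only [← h.sup_eq, SimpleGraph.neighborSet_sup, hu, hv, hw, hHw, huv.1, huv.2,
      Set.singleton_union, Set.empty_union]

end IsMinimalDecomp

theorem exists_isBipartiteDecomp_forall_not_isIsolatedEdge [Finite V] (hG : G.Colorable 4)
    (hedge : ∀ u v, ¬ IsIsolatedEdge G u v) (htri : ∀ u v w, ¬ IsIsolatedTriangle G u v w) :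
    ∃ H K, IsBipartiteDecomp G H K ∧ (∀ u v, ¬ IsIsolatedEdge H u v) ∧
      ∀ u v, ¬ IsIsolatedEdge K u v := by
  obtain ⟨H₀, K₀, hsup, hdisj, hH₀, hK₀⟩ := exists_sup_eq_of_colorable_mul (m := 2) (n := 2) hG
  obtain ⟨H, K, hHK⟩ := exists_isMinimalDecomp ⟨hsup, hdisj, hH₀, hK₀⟩
  have hnot {H K : SimpleGraph V} (hHK : IsMinimalDecomp G H K) (u v) : ¬ IsIsolatedEdge H u v :=
    fun huv ↦ by
      obtain ⟨w, hw⟩ := hHK.exists_isIsolatedTriangle huv (hedge u v)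
      exact htri u v w hw
  exact ⟨H, K, hHK.toIsBipartiteDecomp, hnot hHK, hnot hHK.symm⟩

end Decomposition

section Main

variable {V : Type*} {G : SimpleGraph V} {u v w : V}

theorem IsIsolatedEdge.nonempty_iso_top (h : IsIsolatedEdge G u v) (hG : G.Connected) :
    Nonempty (G ≃g (⊤ : SimpleGraph (Fin 2))) := by
  have hverts (x : V) : x = u ∨ x = v := h.eq_or_eq_of_reachable (hG u x)
  have hcard : Nat.card V = 2 :=
    Nat.card_eq_two_iff.2 ⟨u, v, h.adj.ne, Set.eq_univ_of_forall hverts⟩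
  have : Finite V := Nat.finite_of_card_ne_zero (by lia)
  have htop : G = ⊤ := by
    ext x y
    have huv := h.adj
    obtain hx | hx := hverts x <;> obtain hy | hy := hverts y <;>
      grind [SimpleGraph.top_adj, SimpleGraph.adj_comm, SimpleGraph.Adj.ne]
  rw [htop]
  exact ⟨SimpleGraph.Iso.completeGraph (Finite.equivFinOfCardEq hcard)⟩

variable [Fintype V]

theorem IsIsolatedTriangle.lirTwoLE_three [DecidableEq V] (h : IsIsolatedTriangle G u v w)
    (hG : G.Connected) : LIRtwoLE G 3 := by
  obtain ⟨hu, hv, hw⟩ := h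
  have huv : u ≠ v := (show G.Adj u v from hu.ge (.inl rfl)).ne
  have huw : u ≠ w := (show G.Adj u w from hu.ge (.inr rfl)).ne
  have hvw : v ≠ w := (show G.Adj v w from hv.ge (.inr rfl)).ne
  have hverts (x : V) : x = u ∨ x = v ∨ x = w := by
    by_contra! hx
    obtain ⟨y, hy, z, hz, hyz⟩ := exists_adj_notMem hG (Y := {u, v, w}) ⟨u, by simp⟩
      (x := x) (by simpa using hx)
    have hyz : z ∈ G.neighborSet y := hyz
    obtain rfl | rfl | rfl := hy <;> simp_all
  have hcard : Fintype.card V = 3 := by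
    rw [← card_univ, ← card_eq_three.2 ⟨u, v, w, huv, huw, hvw, rfl⟩]
    congr
    ext x
    simpa using hverts x
  rw [← hcard]
  refine lirTwoLE_card_of_two_le_degree fun x ↦ ?_
  obtain ⟨a, b, hab, hx⟩ : ∃ a b, a ≠ b ∧ G.neighborSet x = {a, b} := by
    obtain rfl | rfl | rfl := hverts x
    · exact ⟨v, w, hvw, hu⟩
    · exact ⟨u, w, huw, hv⟩
    · exact ⟨u, v, huv, hw⟩
  have hadj (y) : G.Adj x y ↔ y ∈ ({a, b} : Finset V) := by
    rw [← SimpleGraph.mem_neighborSet, hx]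
    simp
  rw [degree_eq_card hadj, card_pair hab]

theorem lirTwoLE_four_of_connected [DecidableEq V] (hG : G.Connected) (hcol : G.Colorable 4)
    (hiso : ∀ u v, ¬ IsIsolatedEdge G u v) : LIRtwoLE G 4 := by
  by_cases htri : ∃ u v w, IsIsolatedTriangle G u v w
  · obtain ⟨u, v, w, h⟩ := htri
    exact (h.lirTwoLE_three hG).mono (by norm_num)
  · push Not at htri
    obtain ⟨H, K, hHK, hH, hK⟩ :=
      exists_isBipartiteDecomp_forall_not_isIsolatedEdge hcol hiso htri
    rw [← hHK.sup_eq]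
    exact (lirTwoLE_two_of_isBipartite hHK.left hH).sup hHK.disjoint
      (lirTwoLE_two_of_isBipartite hHK.right hK)

end Main

theorem lir_two_mul_four_colorable_general {V : Type*} [Fintype V] [DecidableEq V]
    (G : SimpleGraph V) (hiso : ∀ u v, ¬ IsIsolatedEdge G u v) (hcol : G.Colorable 4) :
    LIRtwoLE G 4 :=
  .of_components fun C ↦ lirTwoLE_four_of_connected C.connected_toSimpleGraph
    (hcol.of_hom C.toSimpleGraph_hom) fun u v h ↦ hiso u v h.of_toSimpleGraph

/-- If `G` is a connected simple graph not isomorphic to `K₂` that admits a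
proper vertex coloring with at most 4 colors, then `lir(²G) ≤ 4`. -/
theorem lir_two_mul_four_colorable {V : Type*} [Fintype V] [DecidableEq V]
    (G : SimpleGraph V) (hconn : G.Connected)
    (hK2 : ¬ Nonempty (G ≃g (⊤ : SimpleGraph (Fin 2))))
    (hcol : ∃ c : V → Fin 4, ∀ u v : V, G.Adj u v → c u ≠ c v) :
    LIRtwoLE G 4 := by
  obtain ⟨c, hc⟩ := hcol
  exact lir_two_mul_four_colorable_general G (fun u v h ↦ hK2 (h.nonempty_iso_top hconn))
    ⟨SimpleGraph.Coloring.mk c fun {u v} ↦ hc u v⟩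
end
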